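/- arXiv:1004.5211 — 8 statements merged into one kernel-verified Lean document; each statement's English description precedes it below -/
import Mathlib

section
/- For every integer k ≥ 1, the Gauss sum Σ_{q=0}^{2k−1} exp(iπ q²/(2k)) equals e^{iπ/4}·√(2k), and likewise Σ_{q=0}^{2k−1} exp(−iπ q²/(2k)) equals e^{−iπ/4}·√(2k). -/
open Complex Finset

lemma gs_theta_S (τ : ℂ) (hτ : τ ≠ 0) :
    (-I * τ) ^ (1 / 2 : ℂ) * jacobiTheta τ = jacobiTheta (-1 / τ) := by
  have h := jacobiTheta₂_functional_equation 0 τ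
  have h1 : (-I * τ) ^ (1 / 2 : ℂ) ≠ 0 := by
    rw [Ne, cpow_eq_zero_iff, not_and_or]
    exact Or.inl <| mul_ne_zero (neg_ne_zero.mpr I_ne_zero) hτ
  rw [jacobiTheta_eq_jacobiTheta₂, jacobiTheta_eq_jacobiTheta₂, h]
  simp only [zero_div, ne_eq, OfNat.ofNat_ne_zero, not_false_eq_true, zero_pow, mul_zero,
    Complex.exp_zero, mul_one]
  field_simp

lemma gs_theta_per (k : ℕ) (τ : ℂ) : jacobiTheta (2 * (k : ℂ) + τ) = jacobiTheta τ := by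
  induction k with
  | zero => simp
  | succ n ih =>
    rw [← ih, ← jacobiTheta_two_add (2 * (n : ℂ) + τ)]
    congr 1
    push_cast
    ring

/-- decomposition of theta by residue classes -/
lemma gs_decomp (k : ℕ) (hk : 1 ≤ k) (t : ℝ) (ht : 0 < t) :
    jacobiTheta (1 / (2 * (k : ℂ)) + I / ((2 * (k : ℂ)) ^ 2 * t)) =
      (∑ q ∈ Finset.range (2 * k),
        Complex.exp (Real.pi * Complex.I * (q : ℂ) ^ 2 / (2 * (k : ℂ))) *
          (HurwitzZeta.cosKernel (((q : ℝ) / (2 * (k : ℝ)) : ℝ) : UnitAddCircle) t : ℂ)) *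
        (t : ℂ) ^ (1 / 2 : ℂ) := by
  have hk0 : (k : ℂ) ≠ 0 := by exact_mod_cast (by omega : k ≠ 0)
  have hkR : (k : ℝ) ≠ 0 := by exact_mod_cast (by omega : k ≠ 0)
  have ht0 : (t : ℂ) ≠ 0 := by exact_mod_cast ht.ne'
  set τ : ℂ := 1 / (2 * (k : ℂ)) + I / ((2 * (k : ℂ)) ^ 2 * t) with hτ
  have him : 0 < τ.im := by
    have : τ = ((1 / (2 * k) : ℝ) : ℂ) + ((1 / ((2 * k) ^ 2 * t) : ℝ) : ℂ) * I := by
      rw [hτ]; push_cast; ring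
    rw [this, add_im, ofReal_im, im_ofReal_mul, I_im]
    positivity
  have : NeZero (2 * k) := ⟨by omega⟩
  have hs := hasSum_jacobiTheta₂_term 0 him
  rw [← jacobiTheta_eq_jacobiTheta₂] at hs
  have hs2 := (Int.divModEquiv (2 * k)).symm.hasSum_iff.mpr hs
  have hs3 := ((Equiv.prodComm _ _).hasSum_iff (f := _)).mpr hs2
  have hE : ∀ r : Fin (2 * k), HasSum (fun m : ℤ ↦
      jacobiTheta₂_term ((Int.divModEquiv (2 * k)).symm (m, r)) 0 τ)
      (Complex.exp (Real.pi * Complex.I * ((r : ℕ) : ℂ) ^ 2 / (2 * (k : ℂ))) *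
        (HurwitzZeta.evenKernel ((((r : ℕ) : ℝ) / (2 * (k : ℝ)) : ℝ) : UnitAddCircle)
          (1 / t) : ℂ)) := by
    intro r
    have := (hasSum_ofReal.mpr (HurwitzZeta.hasSum_int_evenKernel
      (((r : ℕ) : ℝ) / (2 * (k : ℝ))) (one_div_pos.mpr ht))).mul_left
      (Complex.exp (Real.pi * Complex.I * ((r : ℕ) : ℂ) ^ 2 / (2 * (k : ℂ))))
    refine this.congr_fun fun m ↦ ?_
    rw [jacobiTheta₂_term, ofReal_exp, ← Complex.exp_add, Int.divModEquiv_symm_apply]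
    rw [Complex.exp_eq_exp_iff_exists_int]
    refine ⟨k * m ^ 2 + m * r, ?_⟩
    rw [hτ]
    push_cast
    field_simp
    ring_nf
    simp only [I_sq]
    ring
  have hs4 := hs3.prod_fiberwise hE
  have hs5 := hs4.unique (hasSum_fintype _)
  rw [hs5, Finset.sum_mul, ← Fin.sum_univ_eq_sum_range (fun q : ℕ ↦
    Complex.exp (Real.pi * Complex.I * (q : ℂ) ^ 2 / (2 * (k : ℂ))) *
          (HurwitzZeta.cosKernel (((q : ℝ) / (2 * (k : ℝ)) : ℝ) : UnitAddCircle) t : ℂ) *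
        (t : ℂ) ^ (1 / 2 : ℂ))]
  refine Finset.sum_congr rfl fun r _ ↦ ?_
  rw [HurwitzZeta.evenKernel_functional_equation,
    mul_assoc (Complex.exp _)]
  congr 1
  rw [one_div_one_div, one_div t, Real.inv_rpow ht.le, one_div, inv_inv, mul_comm, ofReal_mul,
    ofReal_cpow ht.le]
  simp

lemma gs_cpow (t : ℝ) (ht : 0 < t) (z : ℂ) (hz : z ≠ 0) :
    ((t : ℂ) * z) ^ (1 / 2 : ℂ) = (t : ℂ) ^ (1 / 2 : ℂ) * z ^ (1 / 2 : ℂ) := by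
  have ht0 : (t : ℂ) ≠ 0 := by exact_mod_cast ht.ne'
  rw [cpow_def_of_ne_zero (mul_ne_zero ht0 hz), cpow_def_of_ne_zero ht0, cpow_def_of_ne_zero hz,
    log_ofReal_mul ht hz, ← Complex.exp_add, ofReal_log ht.le, add_mul]

open Filter Topology in
lemma gs_limit (k : ℕ) (hk : 1 ≤ k) :
    (-I * (1 / (2 * (k : ℂ)))) ^ (1 / 2 : ℂ) * (∑ q ∈ Finset.range (2 * k),
        Complex.exp (Real.pi * Complex.I * (q : ℂ) ^ 2 / (2 * (k : ℂ)))) = 1 := by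
  have hk0 : (k : ℂ) ≠ 0 := by exact_mod_cast (by omega : k ≠ 0)
  have hkR : (0 : ℝ) < k := by exact_mod_cast (by omega : 0 < k)
  have hinv : Tendsto (fun t : ℝ ↦ ((t⁻¹ : ℝ) : ℂ)) atTop (𝓝 0) := by
    have := (continuous_ofReal.tendsto 0).comp tendsto_inv_atTop_zero
    simpa [Function.comp_def] using this
  have key : ∀ t : ℝ, 0 < t →
      (-I * (1 / (2 * (k : ℂ)) + I / ((2 * (k : ℂ)) ^ 2) * ((t⁻¹ : ℝ) : ℂ))) ^ (1 / 2 : ℂ) *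
      (∑ q ∈ Finset.range (2 * k),
        Complex.exp (Real.pi * Complex.I * (q : ℂ) ^ 2 / (2 * (k : ℂ))) *
          (HurwitzZeta.cosKernel (((q : ℝ) / (2 * (k : ℝ)) : ℝ) : UnitAddCircle) t : ℂ)) =
      (1 + I / (2 * k) * ((t⁻¹ : ℝ) : ℂ)) ^ (1 / 2 : ℂ) *
        jacobiTheta (-1 / (2 * k) + I * t) := by
    intro t ht
    have ht0 : (t : ℂ) ≠ 0 := by exact_mod_cast ht.ne'
    have hD := gs_decomp k hk t ht
    set τ : ℂ := 1 / (2 * (k : ℂ)) + I / ((2 * (k : ℂ)) ^ 2 * t) with hτ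
    set σ : ℂ := -1 / (2 * (k : ℂ)) + I * t with hσ
    have hσ0 : σ ≠ 0 := by
      intro h
      have h2 : σ = ((-1 / (2 * k) : ℝ) : ℂ) + (t : ℂ) * I := by rw [hσ]; push_cast; ring
      have := congrArg im h
      rw [h2, add_im, ofReal_im, im_ofReal_mul, I_im, zero_im] at this
      linarith
    have hτσ : τ = σ / (2 * k * t * I) := by
      rw [hτ, hσ]
      field_simp
      ring_nf
      simp only [I_sq]
      ring
    have hτ0 : τ ≠ 0 := by
      rw [hτσ]
      exact div_ne_zero hσ0 (by simp [hk0, ht0])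
    have h1 := gs_theta_S τ hτ0
    have h2 := gs_theta_S σ hσ0
    have h3 : -1 / σ = 2 * (k : ℂ) + -1 / τ := by
      rw [hτσ]
      field_simp
      rw [hσ]
      field_simp
      ring
    rw [h3, gs_theta_per, ← h1, hD] at h2
    have h4 : -I * σ = (t : ℂ) * (1 + I / (2 * k) * ((t⁻¹ : ℝ) : ℂ)) := by
      rw [hσ]; push_cast; field_simp; ring_nf; simp only [I_sq]; ring
    have h5 : 1 + I / (2 * k) * ((t⁻¹ : ℝ) : ℂ) ≠ 0 := by
      intro h
      rw [h, mul_zero] at h4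
      simp [hσ0] at h4
    rw [h4, gs_cpow t ht _ h5] at h2
    have h6 : (t : ℂ) ^ (1 / 2 : ℂ) ≠ 0 := by
      rw [Ne, cpow_eq_zero_iff, not_and_or]; exact Or.inl ht0
    have h7 : 1 / (2 * (k : ℂ)) + I / ((2 * (k : ℂ)) ^ 2) * ((t⁻¹ : ℝ) : ℂ) = τ := by
      rw [hτ]; push_cast; field_simp
    rw [h7]
    apply mul_left_cancel₀ h6
    rw [← mul_assoc ((t : ℂ) ^ (1 / 2 : ℂ)) ((1 + I / (2 * k) * ((t⁻¹ : ℝ) : ℂ)) ^ (1 / 2 : ℂ)), h2]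
    ring
  have hexp : ∀ p : ℝ, 0 < p → Tendsto (fun x : ℝ ↦ Real.exp (-p * x)) atTop (𝓝 0) := by
    intro p hp
    exact Real.tendsto_exp_atBot.comp (tendsto_id.const_mul_atTop_of_neg (by linarith))
  have hcos : ∀ a : UnitAddCircle,
      Tendsto (fun t ↦ (HurwitzZeta.cosKernel a t : ℂ)) atTop (𝓝 1) := by
    intro a
    obtain ⟨p, hp, hO⟩ := HurwitzZeta.isBigO_atTop_cosKernel_sub a
    have h := hO.trans_tendsto (hexp p hp)
    have h' : Tendsto (HurwitzZeta.cosKernel a) atTop (𝓝 1) := by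
      simpa using h.add_const 1
    simpa [Function.comp_def] using (continuous_ofReal.tendsto 1).comp h'
  have hth : Tendsto (fun t : ℝ ↦ jacobiTheta (-1 / (2 * k) + I * t)) atTop (𝓝 1) := by
    have him : ∀ t : ℝ, (-1 / (2 * (k : ℂ)) + I * t).im = t := by
      intro t
      have h2 : (-1 / (2 * (k : ℂ)) + I * t) = ((-1 / (2 * k) : ℝ) : ℂ) + (t : ℂ) * I := by
        push_cast; ring
      rw [h2, add_im, ofReal_im]; simp
    have h1 : Tendsto (fun t : ℝ ↦ (-1 / (2 * (k : ℂ)) + I * t)) atTop (comap im atTop) := by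
      rw [tendsto_comap_iff]
      refine tendsto_id.congr fun t ↦ ?_
      exact (him t).symm
    have h2 := isBigO_at_im_infty_jacobiTheta_sub_one.comp_tendsto h1
    have h3 : Tendsto ((fun τ : ℂ => Real.exp (-Real.pi * τ.im)) ∘
        (fun t : ℝ ↦ (-1 / (2 * (k : ℂ)) + I * t))) atTop (𝓝 0) := by
      refine (hexp Real.pi Real.pi_pos).congr fun t ↦ ?_
      simp only [Function.comp_apply, him]
    have h := h2.trans_tendsto h3
    simpa [Function.comp_def] using h.add_const 1
  have hL1 : Tendsto (fun t : ℝ ↦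
      (-I * (1 / (2 * (k : ℂ)) + I / ((2 * (k : ℂ)) ^ 2) * ((t⁻¹ : ℝ) : ℂ))) ^ (1 / 2 : ℂ)) atTop
      (𝓝 ((-I * (1 / (2 * (k : ℂ)))) ^ (1 / 2 : ℂ))) := by
    refine Tendsto.cpow ?_ tendsto_const_nhds ?_
    · have := ((hinv.const_mul (I / ((2 * (k : ℂ)) ^ 2))).const_add (1 / (2 * (k : ℂ)))).const_mul
        (-I)
      simpa using this
    · right
      have : -I * (1 / (2 * (k : ℂ))) = ((-(1 / (2 * k)) : ℝ) : ℂ) * I := by push_cast; ring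
      rw [this, im_ofReal_mul, I_im]
      have : (0 : ℝ) < 1 / (2 * k) := by positivity
      linarith
  have hL2 : Tendsto (fun t : ℝ ↦ (1 + I / (2 * k) * ((t⁻¹ : ℝ) : ℂ)) ^ (1 / 2 : ℂ)) atTop
      (𝓝 1) := by
    have h : Tendsto (fun t : ℝ ↦ (1 + I / (2 * k) * ((t⁻¹ : ℝ) : ℂ)) ^ (1 / 2 : ℂ)) atTop
      (𝓝 ((1 : ℂ) ^ (1 / 2 : ℂ))) := by
      refine Tendsto.cpow ?_ tendsto_const_nhds (by simp)
      simpa using (hinv.const_mul (I / (2 * (k : ℂ)))).const_add 1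
    simpa using h
  have hS : Tendsto (fun t : ℝ ↦ ∑ q ∈ Finset.range (2 * k),
        Complex.exp (Real.pi * Complex.I * (q : ℂ) ^ 2 / (2 * (k : ℂ))) *
          (HurwitzZeta.cosKernel (((q : ℝ) / (2 * (k : ℝ)) : ℝ) : UnitAddCircle) t : ℂ)) atTop
      (𝓝 (∑ q ∈ Finset.range (2 * k),
        Complex.exp (Real.pi * Complex.I * (q : ℂ) ^ 2 / (2 * (k : ℂ))))) := by
    refine tendsto_finsetSum _ fun q _ ↦ ?_
    simpa using (hcos _).const_mul
      (Complex.exp (Real.pi * Complex.I * (q : ℂ) ^ 2 / (2 * (k : ℂ))))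
  have hl := hL1.mul hS
  have hr := hL2.mul hth
  rw [one_mul] at hr
  refine tendsto_nhds_unique hl (hr.congr' ?_)
  filter_upwards [eventually_gt_atTop 0] with t ht
  exact (key t ht).symm

lemma gs_main (k : ℕ) (hk : 1 ≤ k) :
    (∑ q ∈ Finset.range (2 * k),
        Complex.exp (Real.pi * Complex.I * (q : ℂ) ^ 2 / (2 * (k : ℂ)))) =
      Complex.exp (Real.pi * Complex.I / 4) * (Real.sqrt (2 * k) : ℂ) := by
  have h := gs_limit k hk
  have hkR : (0 : ℝ) < k := by exact_mod_cast (by omega : 0 < k)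
  have h1 : (-I * (1 / (2 * (k : ℂ)))) ^ (1 / 2 : ℂ) *
      (Complex.exp (Real.pi * Complex.I / 4) * (Real.sqrt (2 * k) : ℂ)) = 1 := by
    have e : -I * (1 / (2 * (k : ℂ))) = ((1 / (2 * k) : ℝ) : ℂ) * (-I) := by push_cast; ring
    have hp : (0 : ℝ) < 1 / (2 * k) := by positivity
    rw [e, gs_cpow _ hp _ (by simp), cpow_def_of_ne_zero (x := -I) (by simp), log_neg_I]
    have e2 : (((1 / (2 * k) : ℝ) : ℂ)) ^ (1 / 2 : ℂ) = ((Real.sqrt (1 / (2 * k)) : ℝ) : ℂ) := by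
      rw [Real.sqrt_eq_rpow, ofReal_cpow hp.le]; simp
    rw [e2]
    have e3 : Real.sqrt (1 / (2 * k)) * Real.sqrt (2 * k) = 1 := by
      rw [← Real.sqrt_mul hp.le, one_div_mul_cancel (by positivity), Real.sqrt_one]
    have e4 : Complex.exp (-(Real.pi / 2) * I * (1 / 2)) * Complex.exp (Real.pi * I / 4) = 1 := by
      rw [← Complex.exp_add, show (-(Real.pi / 2) * I * (1 / 2) + Real.pi * I / 4 : ℂ) = 0 by ring,
        Complex.exp_zero]
    calc _ = (Complex.exp (-(Real.pi / 2) * I * (1 / 2)) * Complex.exp (Real.pi * I / 4)) *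
          ((Real.sqrt (1 / (2 * k)) * Real.sqrt (2 * k) : ℝ) : ℂ) := by push_cast; ring
      _ = 1 := by rw [e3, e4]; simp
  have h2 : (-I * (1 / (2 * (k : ℂ)))) ^ (1 / 2 : ℂ) ≠ 0 := left_ne_zero_of_mul_eq_one h
  exact mul_left_cancel₀ h2 (h.trans h1.symm)

/-- The Gauss sums `Σ_{q=0}^{2k-1} exp(± iπ q² / (2k))` equal `e^{± iπ/4} √(2k)`. -/
theorem gauss_sum_unit_framing (k : ℕ) (hk : 1 ≤ k) :
    (∑ q ∈ Finset.range (2 * k),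
        Complex.exp (Real.pi * Complex.I * (q : ℂ) ^ 2 / (2 * (k : ℂ)))) =
      Complex.exp (Real.pi * Complex.I / 4) * (Real.sqrt (2 * k) : ℂ) ∧
    (∑ q ∈ Finset.range (2 * k),
        Complex.exp (-(Real.pi * Complex.I * (q : ℂ) ^ 2 / (2 * (k : ℂ))))) =
      Complex.exp (-(Real.pi * Complex.I / 4)) * (Real.sqrt (2 * k) : ℂ) := by
  refine ⟨gs_main k hk, ?_⟩
  have h := congrArg (starRingEnd ℂ) (gs_main k hk)
  rw [map_sum, map_mul, conj_ofReal, ← Complex.exp_conj] at h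
  simp only [← Complex.exp_conj, map_div₀, map_mul, map_pow, conj_ofReal, conj_I, map_natCast,
    map_ofNat] at h
  simpa only [mul_neg, neg_mul, neg_div] using h
end

section
/- Let a, b, c be integers with a ≠ 0, c ≠ 0 and a·c + b even. Then the following reciprocity formula holds: Σ_{n=0}^{|c|−1} exp(−(iπ/c)(a n² + b n)) = √(|c/a|) · exp(−(iπ/(4ac))(|ac| − b²)) · Σ_{n=0}^{|a|−1} exp((iπ/a)(c n² + b n)). -/
open Complex Finset

lemma gsr_cpow_half (r : ℝ) (hr : 0 < r) (x : ℂ) (hx : x ≠ 0) :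
    ((r : ℂ) * x) ^ (1 / 2 : ℂ) = (Real.sqrt r : ℂ) * x ^ (1 / 2 : ℂ) := by
  have hr' : (r : ℂ) ≠ 0 := by exact_mod_cast hr.ne'
  rw [Complex.cpow_def_of_ne_zero (mul_ne_zero hr' hx), Complex.log_ofReal_mul hr hx, add_mul,
    Complex.exp_add, ← Complex.cpow_def_of_ne_zero hx, Complex.ofReal_log hr.le,
    ← Complex.cpow_def_of_ne_zero hr', Real.sqrt_eq_rpow, Complex.ofReal_cpow hr.le]
  norm_num

lemma gsr_summable (h : ℤ → ℂ) (hb : ∀ n, ‖h n‖ ≤ 1) (s : ℝ) (u : ℂ) (hu : 0 < u.re) :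
    Summable (fun n : ℤ => h n * cexp (-Real.pi / u * (n + s) ^ 2)) := by
  have h0 : 0 < (I * u⁻¹).im := by
    have : u ≠ 0 := by rintro rfl; simp at hu
    simp only [I_mul_im, inv_re]
    exact div_pos hu (normSq_pos.mpr this)
  have h1 := ((summable_jacobiTheta₂_term_iff (I * u⁻¹ * s) (I * u⁻¹)).mpr h0)
  have h2 := (h1.mul_left (cexp (-Real.pi / u * s ^ 2))).norm
  refine Summable.of_norm_bounded h2 (fun n => ?_)
  rw [norm_mul]
  refine (mul_le_of_le_one_left (norm_nonneg _) (hb n)).trans (le_of_eq ?_)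
  rw [jacobiTheta₂_term, ← Complex.exp_add]
  congr 2
  linear_combination (-(2 * Real.pi * n * u⁻¹ * s) - (Real.pi * n ^ 2 * u⁻¹) : ℂ) * I_sq

lemma gsr_theta_limit (s : ℝ) (l : Filter ℝ) (u : ℝ → ℂ)
    (hu : Filter.Tendsto (fun t => (u t).re) l Filter.atTop) :
    Filter.Tendsto (fun t => 1 / (u t) ^ (1 / 2 : ℂ) *
      ∑' n : ℤ, cexp (-Real.pi / (u t) * (n + s) ^ 2)) l (nhds 1) := by
  have key : Filter.Tendsto (fun t => ∑' n : ℤ,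
      cexp (-Real.pi * (u t) * n ^ 2 + 2 * Real.pi * (-I * s) * n)) l
      (nhds (∑' n : ℤ, if n = 0 then (1 : ℂ) else 0)) := by
    have hnorm : ∀ t (n : ℤ), ‖cexp (-Real.pi * (u t) * n ^ 2 + 2 * Real.pi * (-I * s) * n)‖
        = Real.exp (-(Real.pi * n ^ 2) * (u t).re) := by
      intro t n
      rw [Complex.norm_exp]
      congr 1
      have e : (-Real.pi * (u t) * n ^ 2 + 2 * Real.pi * (-I * s) * n : ℂ)
        = ((-Real.pi * n ^ 2 : ℝ) : ℂ) * u t + ((-2 * Real.pi * s * n : ℝ) : ℂ) * I := by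
        push_cast; ring
      rw [e, add_re, re_ofReal_mul, re_ofReal_mul, I_re]
      ring
    have hs : Summable (fun n : ℤ => Real.exp (-(Real.pi * n ^ 2))) := by
      have := (gsr_summable (fun _ => 1) (by simp) 0 1 (by simp)).norm
      refine this.congr (fun n => ?_)
      rw [one_mul, Complex.norm_exp]
      congr 1
      have e : (-Real.pi / 1 * (n + (0 : ℝ)) ^ 2 : ℂ) = ((-(Real.pi * n ^ 2) : ℝ) : ℂ) := by
        push_cast; ring
      rw [e, ofReal_re]
    refine tendsto_tsum_of_dominated_convergence hs (fun n => ?_) ?_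
    · split_ifs with h
      · subst h; simpa using tendsto_const_nhds
      · rw [tendsto_zero_iff_norm_tendsto_zero]
        simp_rw [hnorm]
        refine Real.tendsto_exp_atBot.comp ?_
        refine hu.const_mul_atTop_of_neg ?_
        have : (0:ℝ) < (n:ℝ) ^ 2 := by positivity
        have := mul_pos Real.pi_pos this
        linarith
    · filter_upwards [hu.eventually_ge_atTop 1] with t ht n
      rw [hnorm]
      apply Real.exp_le_exp.mpr
      have : 0 ≤ Real.pi * (n:ℝ) ^ 2 := by positivity
      nlinarith
  rw [tsum_ite_eq] at key
  refine key.congr' ?_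
  filter_upwards [hu.eventually_gt_atTop 0] with t ht
  rw [Complex.tsum_exp_neg_quadratic ht]
  congr 3
  ext n
  congr 3
  linear_combination (-s : ℂ) * I_sq

lemma gsr_tsum_residue (N : ℕ) [NeZero N] (f : ℤ → ℂ) (hf : Summable f) :
    ∑' n : ℤ, f n = ∑ r : Fin N, ∑' m : ℤ, f (m * N + (r : ℕ)) := by
  let e : Fin N × ℤ ≃ ℤ := (Equiv.prodComm (Fin N) ℤ).trans (Int.divModEquiv N).symm
  have h1 : Summable (fun p => f (e p)) := e.summable_iff.mpr hf
  rw [← e.tsum_eq f, h1.tsum_prod, tsum_fintype]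
  rfl

lemma gsr_periodic_limit (N : ℕ) (hN : N ≠ 0) (h : ℤ → ℂ) (hb : ∀ n, ‖h n‖ ≤ 1)
    (hp : Function.Periodic h N) (s : ℝ) (l : Filter ℝ) (u : ℝ → ℂ)
    (hu : Filter.Tendsto (fun t => (u t).re) l Filter.atTop) :
    Filter.Tendsto (fun t => 1 / (u t) ^ (1 / 2 : ℂ) *
      ∑' n : ℤ, h n * cexp (-Real.pi / (u t) * (n + s) ^ 2)) l
      (nhds ((1 / N : ℂ) * ∑ r ∈ Finset.range N, h r)) := by
  have : NeZero N := ⟨hN⟩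
  have hNC : (N : ℂ) ≠ 0 := by exact_mod_cast hN
  have hNpos : (0 : ℝ) < N := by exact_mod_cast Nat.pos_of_ne_zero hN
  have hlim : Filter.Tendsto (fun t => (1 / N : ℂ) * ∑ r : Fin N, h (r : ℕ) *
      (1 / ((((N:ℝ) ^ 2)⁻¹ : ℝ) * u t) ^ (1 / 2 : ℂ) *
      ∑' n : ℤ, cexp (-Real.pi / ((((N:ℝ) ^ 2)⁻¹ : ℝ) * u t) *
        (n + (((r : ℕ) + s) / N : ℝ)) ^ 2))) l
      (nhds ((1 / N : ℂ) * ∑ r : Fin N, h (r : ℕ) * 1)) := by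
    refine (tendsto_finsetSum _ fun r _ => (gsr_theta_limit _ l _ ?_).const_mul _).const_mul _
    simp_rw [re_ofReal_mul]
    exact hu.const_mul_atTop (by positivity)
  have e0 : ((1 / N : ℂ) * ∑ r : Fin N, h (r : ℕ) * 1) =
      (1 / N : ℂ) * ∑ r ∈ Finset.range N, h r := by
    simp_rw [mul_one]
    rw [Finset.sum_range (fun r : ℕ => h r)]
  rw [e0] at hlim
  refine hlim.congr' ?_
  filter_upwards [hu.eventually_gt_atTop 0] with t ht
  have hu0 : u t ≠ 0 := by intro h0; simp [h0] at ht
  have hsum := gsr_summable h hb s (u t) ht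
  rw [gsr_tsum_residue N _ hsum, Finset.mul_sum, Finset.mul_sum]
  refine Finset.sum_congr rfl fun r _ => ?_
  rw [gsr_cpow_half _ (by positivity) _ hu0, Real.sqrt_inv, Real.sqrt_sq hNpos.le]
  have e1 : ∀ m : ℤ, h (m * N + (r : ℕ)) = h (r : ℕ) := by
    intro m
    rw [add_comm]
    exact hp.int_mul m _
  simp_rw [e1]
  rw [tsum_mul_left]
  have e2 : ∀ m : ℤ, cexp (-Real.pi / ((((N:ℝ) ^ 2)⁻¹ : ℝ) * u t) *
        (m + (((r : ℕ) + s) / N : ℝ)) ^ 2) = cexp (-Real.pi / (u t) *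
        (((m * N + (r : ℕ) : ℤ) : ℂ) + s) ^ 2) := by
    intro m
    congr 1
    push_cast
    field_simp
    ring
  simp_rw [e2]
  push_cast
  field_simp

lemma gsr_I_mul_cpow (k : ℝ) (hk : k ≠ 0) :
    (I * k) ^ (1 / 2 : ℂ) = (Real.sqrt |k| : ℂ) * cexp (Real.pi * I / 4 * (|k| / k : ℝ)) := by
  rcases hk.lt_or_gt with h | h
  · rw [show (I * k : ℂ) = ((-k : ℝ) : ℂ) * (-I) by push_cast; ring,
      gsr_cpow_half _ (by linarith) _ (by simp), abs_of_neg h,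
      Complex.cpow_def_of_ne_zero (by simp), log_neg_I, neg_div, div_self hk]
    congr 2
    push_cast; ring
  · rw [show (I * k : ℂ) = (k : ℂ) * I by ring,
      gsr_cpow_half _ h _ (by simp), abs_of_pos h,
      Complex.cpow_def_of_ne_zero (by simp), log_I, div_self hk]
    congr 2
    push_cast; ring

lemma gsr_periodic (a b c : ℤ) (hc : c ≠ 0) (hpar : 2 ∣ (a * c + b)) :
    Function.Periodic (fun n : ℤ => cexp (Real.pi * I / c * (a * n ^ 2 + b * n))) c.natAbs := by
  have h : Function.Periodic (fun n : ℤ => cexp (Real.pi * I / c * (a * n ^ 2 + b * n))) c := by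
    intro n
    obtain ⟨k, hk⟩ := hpar
    have hk' : (a * c + b : ℂ) = 2 * k := by exact_mod_cast hk
    have hc' : (c : ℂ) ≠ 0 := by exact_mod_cast hc
    refine Complex.exp_eq_exp_iff_exists_int.mpr ⟨a * n + k, ?_⟩
    push_cast
    field_simp
    linear_combination (c : ℂ) * hk'
  rcases Int.natAbs_eq c with h' | h'
  · rw [← h']; exact h
  · rw [show ((c.natAbs : ℕ) : ℤ) = -c by omega]; exact h.neg

lemma gsr_norm (a b c : ℤ) (n : ℤ) :
    ‖cexp (Real.pi * I / c * (a * n ^ 2 + b * n))‖ ≤ 1 := by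
  rw [show (Real.pi * I / c * (a * n ^ 2 + b * n) : ℂ) =
    ((Real.pi / c * (a * n ^ 2 + b * n) : ℝ) : ℂ) * I by push_cast; ring, norm_exp_ofReal_mul_I]

lemma gsr_main (a b c : ℤ) (ha : a ≠ 0) (hc : c ≠ 0)
    (hpar : 2 ∣ (a * c + b)) (k : ℝ) (hk : k = a / c) :
    (1 / (c.natAbs : ℂ)) * ∑ n ∈ Finset.range c.natAbs,
        cexp (Real.pi * I / (c : ℂ) * ((-a : ℤ) * ((n : ℤ) : ℂ) ^ 2 + (-b : ℤ) * ((n : ℤ) : ℂ))) =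
      1 / (I * k) ^ (1 / 2 : ℂ) * cexp (Real.pi * I * b ^ 2 / (4 * a * c)) * |k| *
      ((1 / (a.natAbs : ℂ)) * ∑ n ∈ Finset.range a.natAbs,
        cexp (Real.pi * I / (a : ℂ) * (c * ((n : ℤ) : ℂ) ^ 2 + b * ((n : ℤ) : ℂ)))) := by
  have hkC : (k : ℂ) = a / c := by rw [hk]; push_cast; rfl
  have haC : (a : ℂ) ≠ 0 := by exact_mod_cast ha
  have hcC : (c : ℂ) ≠ 0 := by exact_mod_cast hc
  have hk0 : k ≠ 0 := by
    rw [hk]; exact div_ne_zero (by exact_mod_cast ha) (by exact_mod_cast hc)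
  have hk0C : (k : ℂ) ≠ 0 := by exact_mod_cast hk0
  have hk2 : 0 < k ^ 2 := by positivity
  have L1 := gsr_periodic_limit c.natAbs (by simpa using hc) _ (gsr_norm (-a) (-b) c)
    (gsr_periodic (-a) (-b) c hc (by rw [neg_mul, ← neg_add]; exact (dvd_neg).mpr hpar)) 0
    Filter.atTop (fun t : ℝ => (t : ℂ)) Filter.tendsto_id
  have L2 := gsr_periodic_limit a.natAbs (by simpa using ha) _ (gsr_norm c b a)
    (gsr_periodic c b a ha (by rwa [mul_comm])) (b / (2 * c))
    Filter.atTop (fun t : ℝ => ((k ^ 2 : ℝ) : ℂ) * t - I * k) (by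
      have : ∀ t : ℝ, (((k ^ 2 : ℝ) : ℂ) * t - I * k).re = k ^ 2 * t := by
        intro t
        rw [sub_re, re_ofReal_mul, ofReal_re, mul_comm I, re_ofReal_mul, I_re]; ring
      simp_rw [this]
      exact Filter.tendsto_id.const_mul_atTop hk2)
  have hinv : Filter.Tendsto (fun t : ℝ => (t : ℂ)⁻¹) Filter.atTop (nhds 0) := by
    have := (continuous_ofReal.tendsto 0).comp tendsto_inv_atTop_zero
    simpa [Function.comp_def] using this
  have L3 : Filter.Tendsto (fun t : ℝ => ((t : ℂ)⁻¹ + I * k) ^ (1 / 2 : ℂ)) Filter.atTop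
      (nhds ((I * k) ^ (1 / 2 : ℂ))) := by
    have h1 : Filter.Tendsto (fun t : ℝ => ((t : ℂ)⁻¹ + I * k)) Filter.atTop (nhds (I * k)) := by
      simpa using hinv.add_const (I * k : ℂ)
    refine (continuousAt_cpow_const ?_).tendsto.comp h1
    right; simpa using hk0
  have L4 : Filter.Tendsto (fun t : ℝ => (((k ^ 2 : ℝ) : ℂ) - I * k * (t : ℂ)⁻¹) ^ (1 / 2 : ℂ))
      Filter.atTop (nhds (|k| : ℝ)) := by
    have h1 : Filter.Tendsto (fun t : ℝ => (((k ^ 2 : ℝ) : ℂ) - I * k * (t : ℂ)⁻¹))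
        Filter.atTop (nhds ((k ^ 2 : ℝ) : ℂ)) := by
      simpa only [mul_zero, sub_zero] using
        (hinv.const_mul (I * k : ℂ)).const_sub ((k ^ 2 : ℝ) : ℂ)
    have h2 : ((|k| : ℝ) : ℂ) = ((k ^ 2 : ℝ) : ℂ) ^ (1 / 2 : ℂ) := by
      have := gsr_cpow_half (k ^ 2) hk2 1 one_ne_zero
      rw [mul_one, one_cpow, mul_one, Real.sqrt_sq_eq_abs] at this
      exact this.symm
    rw [h2]
    refine (continuousAt_cpow_const ?_).tendsto.comp h1
    left; rw [ofReal_re]; exact hk2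
  have hIk : (I * k : ℂ) ≠ 0 := mul_ne_zero I_ne_zero hk0C
  have hIk' : (I * k : ℂ) ^ (1 / 2 : ℂ) ≠ 0 := by
    rw [Complex.cpow_def_of_ne_zero hIk]; exact Complex.exp_ne_zero _
  have L5 := (((L3.inv₀ hIk').mul_const (cexp (Real.pi * I * b ^ 2 / (4 * a * c)))).mul L4).mul L2
  rw [one_div ((I * k : ℂ) ^ (1 / 2 : ℂ))]
  refine tendsto_nhds_unique L1 (L5.congr' ?_)
  filter_upwards [Filter.eventually_gt_atTop 0] with t ht
  have htC : (t : ℂ) ≠ 0 := by exact_mod_cast ht.ne'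
  have hA : 0 < ((t : ℂ)⁻¹ + I * k).re := by
    rw [add_re, mul_comm I, re_ofReal_mul, I_re, ← ofReal_inv, ofReal_re]
    simpa using ht
  have hA0 : (t : ℂ)⁻¹ + I * k ≠ 0 := by intro h; rw [h] at hA; simp at hA
  have hv : (((k ^ 2 : ℝ) : ℂ) - I * k * (t : ℂ)⁻¹) ≠ 0 := by
    intro h
    have := congrArg Complex.re h
    rw [sub_re, ofReal_re, mul_assoc, mul_comm I, ← ofReal_inv, ← ofReal_mul, re_ofReal_mul,
      I_re, zero_re] at this
    linarith
  have hv2 : (((k ^ 2 : ℝ) : ℂ) - I * k * (t : ℂ)⁻¹) ^ (1 / 2 : ℂ) ≠ 0 := by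
    rw [Complex.cpow_def_of_ne_zero hv]; exact Complex.exp_ne_zero _
  have hu : ((k ^ 2 : ℝ) : ℂ) * t - I * k = (t : ℂ) * (((k ^ 2 : ℝ) : ℂ) - I * k * (t : ℂ)⁻¹) := by
    field_simp
  have hu0 : ((k ^ 2 : ℝ) : ℂ) * t - I * k ≠ 0 := by rw [hu]; exact mul_ne_zero htC hv
  have hAi : ((t : ℂ)⁻¹ + I * k)⁻¹ = (((k ^ 2 : ℝ) : ℂ) * t - I * k)⁻¹ - I * (k : ℂ)⁻¹ := by
    refine inv_eq_of_mul_eq_one_right ?_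
    have : ((t : ℂ)⁻¹ + I * k) * t * (-I * k) = ((k ^ 2 : ℝ) : ℂ) * t - I * k := by
      push_cast
      field_simp
      linear_combination (-t * k : ℂ) * I_sq
    have h3 : ((t : ℂ)⁻¹ + I * k) * (((k ^ 2 : ℝ) : ℂ) * t - I * k)⁻¹ = I * (k : ℂ)⁻¹ * (t : ℂ)⁻¹ := by
      rw [mul_inv_eq_iff_eq_mul₀ hu0, ← this]
      generalize (t : ℂ)⁻¹ + I * k = A
      field_simp
      linear_combination A * I_sq
    have h4 : (k : ℂ) * (k : ℂ)⁻¹ = 1 := mul_inv_cancel₀ hk0C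
    linear_combination h3 - I ^ 2 * h4 - I_sq
  have hP := Complex.tsum_exp_neg_quadratic hA (-I * b / (2 * c))
  have hl : ∀ n : ℤ, cexp (Real.pi * I / (c : ℂ) * ((-a : ℤ) * (n : ℂ) ^ 2 + (-b : ℤ) * (n : ℂ))) *
      cexp (-Real.pi / (t : ℂ) * (n + (0 : ℝ)) ^ 2) =
      cexp (-Real.pi * ((t : ℂ)⁻¹ + I * k) * n ^ 2 + 2 * Real.pi * (-I * b / (2 * c)) * n) := by
    intro n
    rw [← Complex.exp_add, hkC]
    congr 1
    push_cast
    field_simp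
    ring
  have hr : ∀ n : ℤ, cexp (-Real.pi / ((t : ℂ)⁻¹ + I * k) * (n + I * (-I * b / (2 * c))) ^ 2) =
      cexp (Real.pi * I * b ^ 2 / (4 * a * c)) *
      (cexp (Real.pi * I / (a : ℂ) * (c * (n : ℂ) ^ 2 + b * (n : ℂ))) *
      cexp (-Real.pi / (((k ^ 2 : ℝ) : ℂ) * t - I * k) * (n + (b / (2 * c) : ℝ)) ^ 2)) := by
    intro n
    have e1 : I * (-I * b / (2 * c)) = (b / (2 * c) : ℂ) := by
      linear_combination (-b / (2 * c) : ℂ) * I_sq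
    rw [← Complex.exp_add, ← Complex.exp_add, e1, div_eq_mul_inv, hAi, div_eq_mul_inv (-Real.pi : ℂ),
      hkC]
    congr 1
    push_cast
    generalize ((a / c : ℂ) ^ 2 * t - I * (a / c))⁻¹ = w
    field_simp
    ring
  simp_rw [hl]
  rw [hP]
  simp_rw [hr]
  rw [tsum_mul_left, hu, gsr_cpow_half t ht _ hv]
  have ht2 : (t : ℂ) ^ (1 / 2 : ℂ) = (Real.sqrt t : ℂ) := by
    have := gsr_cpow_half t ht 1 one_ne_zero
    rwa [mul_one, one_cpow, mul_one] at this
  rw [ht2]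
  have hst : (Real.sqrt t : ℂ) ≠ 0 := by
    exact_mod_cast (Real.sqrt_pos.mpr ht).ne'
  rw [← hu]
  generalize (∑' n : ℤ, _ : ℂ) = Z
  generalize (((k ^ 2 : ℝ) : ℂ) - I * k * (t : ℂ)⁻¹) ^ (1 / 2 : ℂ) = V at hv2 ⊢
  generalize ((t : ℂ)⁻¹ + I * k) ^ (1 / 2 : ℂ) = W
  generalize cexp _ = E
  field_simp

/-- The reciprocity formula for generalized quadratic Gauss sums: for integers
`a`, `b`, `c` with `a ≠ 0`, `c ≠ 0` and `a*c + b` even,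
`Σ_{n=0}^{|c|-1} exp(-(iπ/c)(a n² + b n))
  = √|c/a| · exp(-(iπ/(4ac))(|ac| - b²)) · Σ_{n=0}^{|a|-1} exp((iπ/a)(c n² + b n))`. -/
theorem gauss_sum_reciprocity (a b c : ℤ) (ha : a ≠ 0) (hc : c ≠ 0)
    (hpar : 2 ∣ (a * c + b)) :
    (∑ n ∈ Finset.range c.natAbs,
        Complex.exp (-(Real.pi * Complex.I / (c : ℂ)) *
          ((a : ℂ) * (n : ℂ) ^ 2 + (b : ℂ) * (n : ℂ)))) =
      (Real.sqrt |(c : ℝ) / (a : ℝ)| : ℂ) *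
        Complex.exp (-(Real.pi * Complex.I / (4 * (a : ℂ) * (c : ℂ))) *
          ((|a * c| : ℤ) - (b : ℂ) ^ 2)) *
        (∑ n ∈ Finset.range a.natAbs,
          Complex.exp ((Real.pi * Complex.I / (a : ℂ)) *
            ((c : ℂ) * (n : ℂ) ^ 2 + (b : ℂ) * (n : ℂ)))) := by
  have hk0 : (a : ℝ) / c ≠ 0 := div_ne_zero (by exact_mod_cast ha) (by exact_mod_cast hc)
  have haC : (a : ℂ) ≠ 0 := by exact_mod_cast ha
  have hcC : (c : ℂ) ≠ 0 := by exact_mod_cast hc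
  have haR : (a : ℝ) ≠ 0 := by exact_mod_cast ha
  have hcR : (c : ℝ) ≠ 0 := by exact_mod_cast hc
  have M := gsr_main a b c ha hc hpar (a / c) rfl
  rw [gsr_I_mul_cpow _ hk0] at M
  have s1 : ∀ n : ℕ, cexp (-(Real.pi * I / (c : ℂ)) * ((a : ℂ) * (n : ℂ) ^ 2 + (b : ℂ) * (n : ℂ))) =
      cexp (Real.pi * I / (c : ℂ) * ((-a : ℤ) * ((n : ℤ) : ℂ) ^ 2 + (-b : ℤ) * ((n : ℤ) : ℂ))) := by
    intro n
    congr 1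
    push_cast
    ring
  simp_rw [s1]
  simp only [Int.cast_natCast] at M ⊢
  have hcn : (c.natAbs : ℂ) = ((|(c : ℝ)| : ℝ) : ℂ) := by
    rw [← Int.cast_abs, Int.abs_eq_natAbs]; simp only [Int.cast_natCast, ofReal_natCast]
  have han : (a.natAbs : ℂ) = ((|(a : ℝ)| : ℝ) : ℂ) := by
    rw [← Int.cast_abs, Int.abs_eq_natAbs]; simp only [Int.cast_natCast, ofReal_natCast]
  have hca : ((|(c : ℝ)| : ℝ) : ℂ) ≠ 0 := by exact_mod_cast abs_ne_zero.mpr hcR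
  have haa : ((|(a : ℝ)| : ℝ) : ℂ) ≠ 0 := by exact_mod_cast abs_ne_zero.mpr haR
  have hsq : (Real.sqrt |(c : ℝ) / a| : ℂ) = (Real.sqrt |(a : ℝ) / c| : ℂ)⁻¹ := by
    rw [← ofReal_inv, ← Real.sqrt_inv, ← abs_inv, inv_div]
  have hE : cexp (-(Real.pi * I / (4 * (a : ℂ) * (c : ℂ))) * ((|a * c| : ℤ) - (b : ℂ) ^ 2)) =
      (cexp (Real.pi * I / 4 * ((|(a : ℝ) / c| / (a / c) : ℝ) : ℂ)))⁻¹ *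
        cexp (Real.pi * I * b ^ 2 / (4 * a * c)) := by
    have e : |(a : ℝ) / c| / (a / c) = ((|a * c| : ℤ) : ℝ) / (a * c) := by
      rw [Int.cast_abs, Int.cast_mul, abs_mul, abs_div]
      have : |(c : ℝ)| * |(c : ℝ)| = c * c := abs_mul_abs_self _
      have hc0 : |(c : ℝ)| ≠ 0 := abs_ne_zero.mpr hcR
      field_simp
      linear_combination -this
    rw [← Complex.exp_neg, ← Complex.exp_add, e]
    congr 1
    generalize |a * c| = z
    push_cast
    field_simp
    ring
  rw [hE, hsq]
  have hst : (Real.sqrt |(a : ℝ) / c| : ℂ) ≠ 0 := by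
    exact_mod_cast (Real.sqrt_pos.mpr (abs_pos.mpr hk0)).ne'
  have hab : ((|(a : ℝ) / c| : ℝ) : ℂ) = ((|(a : ℝ)| : ℝ) : ℂ) / ((|(c : ℝ)| : ℝ) : ℂ) := by
    rw [abs_div, ofReal_div]
  rw [hcn, han] at M
  rw [show ((|(a : ℝ) / c| : ℝ) : ℂ) = ((|(a : ℝ)| : ℝ) : ℂ) / ((|(c : ℝ)| : ℝ) : ℂ) from hab] at M
  generalize (∑ n ∈ Finset.range c.natAbs, _ : ℂ) = X at M ⊢
  generalize (∑ n ∈ Finset.range a.natAbs, _ : ℂ) = Y at M ⊢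
  have hx := Complex.exp_ne_zero (Real.pi * I / 4 * ((|(a : ℝ) / c| / (a / c) : ℝ) : ℂ))
  generalize cexp (Real.pi * I / 4 * ((|(a : ℝ) / c| / (a / c) : ℝ) : ℂ)) = P at M hx ⊢
  generalize cexp _ = Q at M ⊢
  field_simp at M ⊢
  exact M
end

section
/- For all integers k ≥ 1 and p ≥ 1, one has (2k)^{−1/2} · e^{iπ/4} · Σ_{q=0}^{2k−1} exp(−2πi·p·q²/(4k)) = p^{−1/2} · Σ_{n=0}^{p−1} exp(2πi·k·n²/p). In other words, the U(1) Reshetikhin–Turaev invariant of the lens space L_p equals I_k(L_p) = (1/√p) Σ_{n=0}^{p−1} e^{2πik n²/p}. -/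
open Complex Finset

lemma rt_aux_tendsto {α : Type*} {l : Filter α} (x : ℝ) (g : α → ℂ)
    (hg : Filter.Tendsto (fun t => (g t).im) l Filter.atTop) :
    Filter.Tendsto (fun t => jacobiTheta₂ (x : ℂ) (g t)) l (nhds 1) := by
  have h1 : (1 : ℂ) = ∑' n : ℤ, (if n = 0 then (1 : ℂ) else 0) := by
    rw [tsum_ite_eq]
  rw [h1]
  refine tendsto_tsum_of_dominated_convergence
    (bound := fun n : ℤ => Real.exp (-Real.pi * (1 * n ^ 2 - 2 * 0 * |n|))) ?_ ?_ ?_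
  · simpa using summable_pow_mul_jacobiTheta₂_term_bound 0 one_pos 0
  · intro n
    by_cases hn : n = 0
    · subst hn
      simpa [jacobiTheta₂_term] using tendsto_const_nhds
    · rw [if_neg hn, tendsto_zero_iff_norm_tendsto_zero]
      simp_rw [norm_jacobiTheta₂_term]
      refine Real.tendsto_exp_atBot.comp ?_
      simp only [ofReal_im, mul_zero, sub_zero]
      refine Filter.Tendsto.const_mul_atTop_of_neg ?_ hg
      have : (0 : ℝ) < (n : ℝ) ^ 2 := by positivity
      nlinarith [Real.pi_pos]
  · filter_upwards [hg.eventually_ge_atTop 1] with t ht n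
    exact norm_jacobiTheta₂_term_le one_pos (by simp) ht n

lemma rt_aux_split (N : ℕ) [NeZero N] (c : ℤ) (hc : Even (c * N)) (w : ℂ) (hw : 0 < w.re) :
    ((N : ℂ) ^ 2 * w) ^ (1 / 2 : ℂ) * jacobiTheta₂ 0 ((c : ℂ) / N + I * w) =
      ∑ r ∈ Finset.range N, cexp (Real.pi * I * c * (r : ℂ) ^ 2 / N) *
        jacobiTheta₂ (((r : ℝ) / N : ℝ) : ℂ) (I / ((N : ℂ) ^ 2 * w)) := by
  have hN : (N : ℂ) ≠ 0 := by exact_mod_cast NeZero.ne N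
  have hw0 : w ≠ 0 := by rintro rfl; simp at hw
  obtain ⟨e, he⟩ := hc
  have heC : (c : ℂ) * N = e + e := by exact_mod_cast he
  have him : 0 < ((c : ℂ) / N + I * w).im := by
    have : ((c : ℂ) / N) = (((c : ℝ) / N : ℝ) : ℂ) := by push_cast; rfl
    rw [this, add_im, ofReal_im, zero_add, I_mul_im]
    exact hw
  have hs := hasSum_jacobiTheta₂_term 0 him
  have hs2 := (Int.divModEquiv N).symm.hasSum_iff.mpr hs
  have hs3 := (Equiv.prodComm (Fin N) ℤ).hasSum_iff.mpr hs2
  have hpos : (N : ℂ) ^ 2 * w ≠ 0 := by positivity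
  rw [← hs3.tsum_eq, hs3.summable.tsum_prod, tsum_fintype, Finset.mul_sum,
    ← Fin.sum_univ_eq_sum_range (fun r => cexp (Real.pi * I * c * (r : ℂ) ^ 2 / N) *
        jacobiTheta₂ (((r : ℝ) / N : ℝ) : ℂ) (I / ((N : ℂ) ^ 2 * w)))]
  refine Finset.sum_congr rfl fun r _ => ?_
  have key : ∀ m : ℤ, jacobiTheta₂_term (m * N + (r : ℕ) : ℤ) 0 ((c : ℂ) / N + I * w) =
      cexp (Real.pi * I * c * ((r : ℕ) : ℂ) ^ 2 / N) * cexp (Real.pi * I * (I * w) * ((r : ℕ) : ℂ) ^ 2) *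
        jacobiTheta₂_term m (N * (r : ℕ) * (I * w)) (N ^ 2 * (I * w)) := by
    intro m
    simp only [jacobiTheta₂_term]
    rw [← Complex.exp_add, ← Complex.exp_add, Complex.exp_eq_exp_iff_exists_int]
    refine ⟨e * m ^ 2 + c * m * (r : ℕ), ?_⟩
    push_cast
    have : (e : ℂ) = c * N / 2 := by rw [heC]; ring
    rw [this]
    field_simp
    ring
  have h4 : ∀ m : ℤ, (((fun n => jacobiTheta₂_term n 0 ((c : ℂ) / N + I * w)) ∘
      (Int.divModEquiv N).symm) ∘ (Equiv.prodComm (Fin N) ℤ)) (r, m) =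
      jacobiTheta₂_term (m * N + (r : ℕ) : ℤ) 0 ((c : ℂ) / N + I * w) := by
    intro m
    rfl
  simp_rw [h4, key]
  rw [tsum_mul_left]
  change _ * (_ * jacobiTheta₂ _ _) = _
  rw [jacobiTheta₂_functional_equation]
  have e1 : -I * ((N : ℂ) ^ 2 * (I * w)) = N ^ 2 * w := by linear_combination (-(N : ℂ) ^ 2 * w) * I_sq
  have e2 : (N : ℂ) * (r : ℕ) * (I * w) / (N ^ 2 * (I * w)) = ((((r : ℕ) : ℝ) / N : ℝ) : ℂ) := by
    push_cast
    field_simp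
  have e3 : -1 / ((N : ℂ) ^ 2 * (I * w)) = I / ((N : ℂ) ^ 2 * w) := by
    field_simp
    simp
  have e4 : cexp (Real.pi * I * (I * w) * ((r : ℕ) : ℂ) ^ 2) *
      cexp (-Real.pi * I * (N * (r : ℕ) * (I * w)) ^ 2 / (N ^ 2 * (I * w))) = 1 := by
    rw [← Complex.exp_add, Complex.exp_eq_one_iff]
    refine ⟨0, ?_⟩
    field_simp
    simp
  rw [e1, e2, e3]
  have h5 : ((N : ℂ) ^ 2 * w) ^ (1 / 2 : ℂ) ≠ 0 := by
    rw [Ne, cpow_eq_zero_iff]; tauto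
  rw [one_div (((N : ℂ) ^ 2 * w) ^ (1 / 2 : ℂ))]
  set A := ((N : ℂ) ^ 2 * w) ^ (1 / 2 : ℂ)
  set J := jacobiTheta₂ ((((r : ℕ) : ℝ) / N : ℝ) : ℂ) (I / ((N : ℂ) ^ 2 * w))
  set E1 := cexp (Real.pi * I * c * ((r : ℕ) : ℂ) ^ 2 / N)
  linear_combination (E1 * J * (A * A⁻¹)) * e4 + E1 * J * (mul_inv_cancel₀ h5)

lemma rt_aux_cpow (a : ℝ) (ha : 0 < a) :
    (-I * (a : ℂ)) ^ (1 / 2 : ℂ) = (Real.sqrt a : ℂ) * cexp (-(Real.pi * I / 4)) := by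
  rw [mul_comm, cpow_def_of_ne_zero (by simp [ha.ne']), log_ofReal_mul ha (by simp), log_neg_I,
    add_mul, Complex.exp_add, Real.sqrt_eq_rpow, Real.rpow_def_of_pos ha]
  push_cast
  congr 2
  ring

/-- The `U(1)` Reshetikhin–Turaev invariant of the lens space `L_p`, presented by the
unknot with surgery coefficient `p`, equals `(1/√p) Σ_{n=0}^{p-1} e^{2πik n²/p}`:
`(2k)^{-1/2} e^{iπ/4} Σ_{q=0}^{2k-1} exp(-2πi p q²/(4k)) = p^{-1/2} Σ_{n=0}^{p-1} exp(2πi k n²/p)`. -/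
theorem rt_invariant_lens_space (k p : ℕ) (hk : 1 ≤ k) (hp : 1 ≤ p) :
    (Real.sqrt (2 * k) : ℂ)⁻¹ * Complex.exp (Real.pi * Complex.I / 4) *
      (∑ q ∈ Finset.range (2 * k),
        Complex.exp (-(2 * Real.pi * Complex.I * (p : ℂ) * (q : ℂ) ^ 2 / (4 * (k : ℂ))))) =
    (Real.sqrt p : ℂ)⁻¹ *
      (∑ n ∈ Finset.range p,
        Complex.exp (2 * Real.pi * Complex.I * (k : ℂ) * (n : ℂ) ^ 2 / (p : ℂ))) := by
  have : NeZero p := ⟨by omega⟩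
  have : NeZero (2 * k) := ⟨by omega⟩
  have hpR : (0 : ℝ) < p := by exact_mod_cast hp
  have hkR : (0 : ℝ) < k := by exact_mod_cast hk
  have hpC : (p : ℂ) ≠ 0 := by exact_mod_cast hpR.ne'
  have hkC : (k : ℂ) ≠ 0 := by exact_mod_cast hkR.ne'
  set a : ℝ := 2 * k / p with ha
  have haC : (a : ℂ) = 2 * k / p := by rw [ha]; push_cast; rfl
  have ha0 : 0 < a := by positivity
  set l : Filter ℝ := nhdsWithin 0 (Set.Ioi 0) with hl
  have hl0 : Filter.Tendsto (fun t : ℝ => t) l (nhds 0) := nhdsWithin_le_nhds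
  have hpos : ∀ᶠ t in l, (0 : ℝ) < t := self_mem_nhdsWithin
  have hne : ∀ t : ℝ, (a : ℂ) + I * t ≠ 0 := by
    intro t h
    have := congrArg Complex.re h
    simp at this
    exact ha0.ne' this
  -- parameters
  let w : ℝ → ℂ := fun t => t / (a * (a + I * t))
  have hwinv : ∀ t : ℝ, 0 < t → (w t)⁻¹ = ((a ^ 2 / t : ℝ) : ℂ) + (a : ℝ) * I := by
    intro t ht
    have : (t : ℂ) ≠ 0 := by exact_mod_cast ht.ne'
    simp only [w]
    push_cast
    field_simp
  have hwre : ∀ t : ℝ, 0 < t → 0 < (w t).re := by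
    intro t ht
    have h : 0 < ((w t)⁻¹).re := by
      rw [hwinv t ht, add_re, ofReal_re, re_ofReal_mul, I_re, mul_zero, add_zero]
      positivity
    rw [inv_re] at h
    by_contra hcon
    have := div_nonpos_of_nonpos_of_nonneg (not_lt.mp hcon) (normSq_nonneg (w t))
    linarith
  have hinf : Filter.Tendsto (fun t : ℝ => ((p : ℝ) ^ 2)⁻¹ * t⁻¹) l Filter.atTop :=
    Filter.Tendsto.const_mul_atTop (by positivity) tendsto_inv_nhdsGT_zero
  have im1 : ∀ t : ℝ, 0 < t → (I / ((p : ℂ) ^ 2 * (t : ℂ))).im = ((p : ℝ) ^ 2)⁻¹ * t⁻¹ := by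
    intro t ht
    have : I / ((p : ℂ) ^ 2 * (t : ℂ)) = I * ((((p : ℝ) ^ 2)⁻¹ * t⁻¹ : ℝ) : ℂ) := by
      push_cast
      rw [div_eq_mul_inv, mul_inv]
    rw [this, I_mul_im, ofReal_re]
  have im2 : ∀ t : ℝ, 0 < t →
      (I / ((((2 * k : ℕ) : ℂ)) ^ 2 * w t)).im = ((p : ℝ) ^ 2)⁻¹ * t⁻¹ := by
    intro t ht
    have : I / ((((2 * k : ℕ) : ℂ)) ^ 2 * w t) =
        I * (((((2 * k : ℝ) ^ 2)⁻¹ : ℝ) : ℂ) * (w t)⁻¹) := by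
      push_cast
      rw [div_eq_mul_inv, mul_inv]
    rw [this, I_mul_im, re_ofReal_mul, hwinv t ht, add_re, ofReal_re, re_ofReal_mul, I_re, mul_zero,
      add_zero, ha]
    field_simp
  -- the two limits
  have L1 : Filter.Tendsto (fun t : ℝ => ((p : ℂ) ^ 2 * t) ^ (1 / 2 : ℂ) *
      jacobiTheta₂ 0 (((2 * k : ℤ) : ℂ) / p + I * t)) l
      (nhds (∑ r ∈ Finset.range p, cexp (Real.pi * I * (2 * k : ℤ) * (r : ℂ) ^ 2 / p) * 1)) := by
    have := tendsto_finsetSum (f := fun (r : ℕ) (t : ℝ) =>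
      cexp (Real.pi * I * (2 * k : ℤ) * (r : ℂ) ^ 2 / p) *
        jacobiTheta₂ (((r : ℝ) / p : ℝ) : ℂ) (I / ((p : ℂ) ^ 2 * (t : ℂ)))) (x := l)
      (Finset.range p) (fun r _ => (rt_aux_tendsto ((r : ℝ) / p)
        (fun t : ℝ => I / ((p : ℂ) ^ 2 * (t : ℂ))) (hinf.congr' (by
          filter_upwards [hpos] with t ht
          rw [im1 t ht]))).const_mul _)
    refine this.congr' ?_
    filter_upwards [hpos] with t ht
    exact (rt_aux_split p (2 * k) (by rw [mul_assoc]; exact even_two_mul _) t (by simpa using ht)).symm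
  have L2 : Filter.Tendsto (fun t : ℝ => (((2 * k : ℕ) : ℂ) ^ 2 * w t) ^ (1 / 2 : ℂ) *
      jacobiTheta₂ 0 (((-p : ℤ) : ℂ) / (2 * k : ℕ) + I * w t)) l
      (nhds (∑ r ∈ Finset.range (2 * k),
        cexp (Real.pi * I * (-p : ℤ) * (r : ℂ) ^ 2 / (2 * k : ℕ)) * 1)) := by
    have := tendsto_finsetSum (f := fun (r : ℕ) (t : ℝ) =>
      cexp (Real.pi * I * (-p : ℤ) * (r : ℂ) ^ 2 / (2 * k : ℕ)) *
        jacobiTheta₂ (((r : ℝ) / (2 * k : ℕ) : ℝ) : ℂ) (I / (((2 * k : ℕ) : ℂ) ^ 2 * w t))) (x := l)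
      (Finset.range (2 * k)) (fun r _ => (rt_aux_tendsto ((r : ℝ) / (2 * k : ℕ))
        (fun t : ℝ => I / (((2 * k : ℕ) : ℂ) ^ 2 * w t)) (hinf.congr' (by
          filter_upwards [hpos] with t ht
          rw [im2 t ht]))).const_mul _)
    refine this.congr' ?_
    filter_upwards [hpos] with t ht
    refine (rt_aux_split (2 * k) (-p) ?_ (w t) (hwre t ht)).symm
    push_cast
    exact ⟨-p * k, by ring⟩
  have L3 : Filter.Tendsto (fun t : ℝ => ((a : ℂ) / (a + I * t)) ^ (1 / 2 : ℂ) *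
      (-I * (a + I * t)) ^ (1 / 2 : ℂ)) l
      (nhds ((1 : ℂ) ^ (1 / 2 : ℂ) * (-I * (a : ℂ)) ^ (1 / 2 : ℂ))) := by
    have h0 : Filter.Tendsto (fun t : ℝ => (a : ℂ) + I * t) l (nhds (a : ℂ)) := by
      have : Filter.Tendsto (fun t : ℝ => (a : ℂ) + I * t) (nhds 0) (nhds ((a : ℂ) + I * (0 : ℝ))) :=
        (by fun_prop : Continuous (fun t : ℝ => (a : ℂ) + I * t)).tendsto 0
      simp only [ofReal_zero, mul_zero, add_zero] at this
      exact this.mono_left nhdsWithin_le_nhds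
    have haC0 : (a : ℂ) ≠ 0 := by exact_mod_cast ha0.ne'
    refine Filter.Tendsto.mul ?_ ?_
    · refine Filter.Tendsto.cpow ?_ tendsto_const_nhds (by simp)
      have := (tendsto_const_nhds (x := (a : ℂ))).div h0 haC0
      rwa [div_self haC0] at this
    · exact Filter.Tendsto.cpow (h0.const_mul _) tendsto_const_nhds
        (by right; simp [ha0.ne'])
  have L4 := L3.mul L1
  have heq := tendsto_nhds_unique (L4.congr' (by
    filter_upwards [hpos] with t ht
    have htC : (t : ℂ) ≠ 0 := by exact_mod_cast ht.ne'
    have haC0 : (a : ℂ) ≠ 0 := by exact_mod_cast ha0.ne'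
    have hτ : (((2 * k : ℤ) : ℂ) / p + I * t) = a + I * t := by rw [haC]; push_cast; rfl
    have hτ' : (((-p : ℤ) : ℂ) / (2 * k : ℕ) + I * w t) = -1 / (a + I * t) := by
      have h1 : (((-p : ℤ) : ℂ) / (2 * k : ℕ)) = - 1 / a := by
        rw [haC]; push_cast; field_simp
      rw [h1]
      simp only [w]
      have := hne t
      field_simp
      ring
    have hprod : ((2 * k : ℕ) : ℂ) ^ 2 * w t = (((p : ℝ) ^ 2 * t : ℝ) : ℂ) * (a / (a + I * t)) := by
      have h2 : ((2 * k : ℕ) : ℂ) = a * p := by rw [haC]; push_cast; field_simp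
      rw [h2]
      simp only [w]
      have := hne t
      push_cast
      field_simp
    have hsplit : (((p : ℝ) ^ 2 * t : ℝ) * (a / (a + I * t)) : ℂ) ^ (1 / 2 : ℂ) =
        ((p : ℂ) ^ 2 * t) ^ (1 / 2 : ℂ) * (a / (a + I * t)) ^ (1 / 2 : ℂ) := by
      have hr : 0 < (p : ℝ) ^ 2 * t := by positivity
      have hx : (a : ℂ) / (a + I * t) ≠ 0 := div_ne_zero haC0 (hne t)
      have hrC : (((p : ℝ) ^ 2 * t : ℝ) : ℂ) ≠ 0 := by exact_mod_cast hr.ne'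
      have : (p : ℂ) ^ 2 * t = (((p : ℝ) ^ 2 * t : ℝ) : ℂ) := by push_cast; rfl
      rw [this, cpow_def_of_ne_zero (mul_ne_zero hrC hx), log_ofReal_mul hr hx,
        cpow_def_of_ne_zero hrC, cpow_def_of_ne_zero hx, add_mul, Complex.exp_add, ofReal_log hr.le]
    have hF := jacobiTheta₂_functional_equation 0 ((a : ℂ) + I * t)
    have hB : (-I * ((a : ℂ) + I * t)) ^ (1 / 2 : ℂ) ≠ 0 := by
      rw [Ne, cpow_eq_zero_iff]
      have := hne t
      simp [this]
    rw [hτ, hτ', hprod, hsplit, hF]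
    simp only [zero_div, ne_eq, OfNat.ofNat_ne_zero, not_false_eq_true, zero_pow, mul_zero,
      Complex.exp_zero, mul_one]
    generalize (-I * ((a : ℂ) + I * t)) ^ (1 / 2 : ℂ) = B at hB
    field_simp)) L2
  rw [one_cpow, one_mul, rt_aux_cpow a ha0] at heq
  simp only [mul_one] at heq
  have s1 : (∑ q ∈ Finset.range (2 * k),
        Complex.exp (-(2 * Real.pi * Complex.I * (p : ℂ) * (q : ℂ) ^ 2 / (4 * (k : ℂ))))) =
      ∑ r ∈ Finset.range (2 * k), cexp (Real.pi * I * (-p : ℤ) * (r : ℂ) ^ 2 / (2 * k : ℕ)) := by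
    refine Finset.sum_congr rfl fun r _ => ?_
    congr 1
    push_cast
    field_simp
    ring
  have s2 : (∑ n ∈ Finset.range p,
        Complex.exp (2 * Real.pi * Complex.I * (k : ℂ) * (n : ℂ) ^ 2 / (p : ℂ))) =
      ∑ r ∈ Finset.range p, cexp (Real.pi * I * (2 * k : ℤ) * (r : ℂ) ^ 2 / p) := by
    refine Finset.sum_congr rfl fun r _ => ?_
    congr 1
    push_cast
    ring
  rw [s1, s2, ← heq]
  have hsq : (Real.sqrt a : ℂ) = Real.sqrt (2 * k) / Real.sqrt p := by
    rw [ha, Real.sqrt_div (by positivity)]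
    push_cast
    rfl
  have h2k : (Real.sqrt (2 * k) : ℂ) ≠ 0 := by
    exact_mod_cast (Real.sqrt_pos.mpr (by positivity : (0 : ℝ) < 2 * k)).ne'
  rw [hsq, Complex.exp_neg]
  have hE := Complex.exp_ne_zero (Real.pi * I / 4)
  field_simp
end

section
/- Let k ≥ 1 and n, N be natural numbers. Let 𝕃 be an N×N symmetric integer matrix, q : Fin N → ℤ, ℓ : Fin n → Fin N → ℤ, and ε : Fin n → ℤ with ε_i ∈ {1,−1} for every i. Set t_i = Σ_{α} q_α · ℓ_{iα}. Then Σ_{m}, where m ranges over all functions Fin n → {0,1,…,2k−1}, of exp(−(2πi/(4k))·(Σ_{αβ} q_α 𝕃_{αβ} q_β + 2 Σ_i m_i t_i + Σ_i ε_i m_i²)) equals [Σ_{m} exp(−(2πi/(4k)) Σ_i ε_i m_i²)] · exp(−(2πi/(4k))·(Σ_{αβ} q_α 𝕃_{αβ} q_β − Σ_i ε_i t_i²)). In particular the surgery ratio ⟨W(L)W(𝓛)⟩/⟨W(𝓛)⟩ equals exp(−(2πi/(4k))·(q^T 𝕃 q − Σ_i ε_i t_i²)), which is again of the form exp(−(2πi/(4k))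 q′^T 𝕃′ q′) for an integer quadratic form; this is the computational content of the theorem that the set of abelian Chern–Simons observables in any homology 3-sphere coincides with the set of observables in S³. -/
open Complex Finset

theorem shift_aux (k : ℕ) (hk : 1 ≤ k) (s : ℤ) : ∃ e : Fin (2 * k) ≃ Fin (2 * k),
    ∀ m : Fin (2 * k), ∃ d : ℤ, (((e m : Fin (2 * k)) : ℕ) : ℤ) = ((m : ℕ) : ℤ) + s + 2 * k * d := by
  have hpos : (0 : ℤ) < 2 * k := by omega
  haveI : NeZero (2 * k) := ⟨by omega⟩
  have h0 := Int.emod_nonneg s hpos.ne'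
  have h1 := Int.emod_lt_of_pos s hpos
  refine ⟨Equiv.addRight (⟨(s % (2 * k)).toNat, by omega⟩ : Fin (2 * k)), fun m => ?_⟩
  have h2 := Int.emod_add_mul_ediv s (2 * k)
  refine ⟨- (s / (2 * k)) - ((m : ℕ) + s % (2 * k)) / (2 * k), ?_⟩
  have h3 := Int.emod_add_mul_ediv ((m : ℕ) + s % (2 * k)) (2 * k)
  simp only [Equiv.coe_addRight, Fin.val_add]
  push_cast
  rw [Int.toNat_of_nonneg h0]
  linarith

theorem exp_aux (k : ℕ) (hk : 1 ≤ k) (A B : ℂ) (z : ℤ) (h : A = B + 4 * k * z) :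
    Complex.exp (-(2 * Real.pi * Complex.I / (4 * (k : ℂ))) * A) =
    Complex.exp (-(2 * Real.pi * Complex.I / (4 * (k : ℂ))) * B) := by
  have hk0 : (k : ℂ) ≠ 0 := by exact_mod_cast (by omega : k ≠ 0)
  rw [Complex.exp_eq_exp_iff_exists_int]
  refine ⟨-z, ?_⟩
  rw [h]
  push_cast
  field_simp
  ring

/-- Surgery on an algebraically split surgery link with coefficients `±1`:
summing the colours `m i ∈ {0,…,2k-1}` of the `n` surgery components, with
self-linkings `ε i = ±1` and linking numbers `ℓ i α` with the `N` observed components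
of colours `q α`, against the observable of the full link, factorizes as the Gauss
sum over the surgery colours times `exp(-(2πi/(4k))(q ᵀ𝕃 q - Σ_i ε_i t_i²))`,
where `t i = Σ_α q α * ℓ i α`.  This is the computational content of the statement
that the abelian Chern–Simons observables in a homology 3-sphere coincide with
observables in `S³`. -/
theorem homology_sphere_surgery_sum (k n N : ℕ) (hk : 1 ≤ k)
    (𝕃 : Matrix (Fin N) (Fin N) ℤ) (h𝕃 : 𝕃.IsSymm)
    (q : Fin N → ℤ) (ℓ : Fin n → Fin N → ℤ)
    (ε : Fin n → ℤ) (hε : ∀ i, ε i = 1 ∨ ε i = -1)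
    (t : Fin n → ℤ) (ht : ∀ i, t i = ∑ α : Fin N, q α * ℓ i α) :
    (∑ m : Fin n → Fin (2 * k),
        Complex.exp (-(2 * Real.pi * Complex.I / (4 * (k : ℂ))) *
          ((∑ α : Fin N, ∑ β : Fin N, (q α : ℂ) * (𝕃 α β : ℂ) * (q β : ℂ)) +
            2 * (∑ i : Fin n, ((m i : ℕ) : ℂ) * (t i : ℂ)) +
            (∑ i : Fin n, (ε i : ℂ) * ((m i : ℕ) : ℂ) ^ 2)))) =
      (∑ m : Fin n → Fin (2 * k),
        Complex.exp (-(2 * Real.pi * Complex.I / (4 * (k : ℂ))) *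
          (∑ i : Fin n, (ε i : ℂ) * ((m i : ℕ) : ℂ) ^ 2))) *
      Complex.exp (-(2 * Real.pi * Complex.I / (4 * (k : ℂ))) *
        ((∑ α : Fin N, ∑ β : Fin N, (q α : ℂ) * (𝕃 α β : ℂ) * (q β : ℂ)) -
          (∑ i : Fin n, (ε i : ℂ) * (t i : ℂ) ^ 2))) := by
  choose e he using fun i => shift_aux k hk (ε i * t i)
  choose d hd using he
  rw [Finset.sum_mul]
  refine Fintype.sum_equiv (Equiv.piCongrRight e) _ _ fun m => ?_
  rw [← Complex.exp_add, ← mul_add]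
  refine exp_aux k hk _ _
    (-∑ i, ε i * (d i (m i) * ((m i : ℕ) + ε i * t i) + k * d i (m i) ^ 2)) ?_
  have key : ∑ i : Fin n, (ε i : ℂ) * ((((Equiv.piCongrRight e) m i : Fin (2 * k)) : ℕ) : ℂ) ^ 2 =
      (∑ i : Fin n, (ε i : ℂ) * ((m i : ℕ) : ℂ) ^ 2) +
      2 * (∑ i : Fin n, ((m i : ℕ) : ℂ) * (t i : ℂ)) + (∑ i : Fin n, (ε i : ℂ) * (t i : ℂ) ^ 2) +
      4 * k * ((∑ i, ε i * (d i (m i) * ((m i : ℕ) + ε i * t i) + k * d i (m i) ^ 2) : ℤ) : ℂ) := by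
    push_cast
    simp only [Finset.mul_sum, ← Finset.sum_add_distrib]
    refine Finset.sum_congr rfl fun i _ => ?_
    have h : ((((e i) (m i) : Fin (2 * k)) : ℕ) : ℂ) =
        ((m i : ℕ) : ℂ) + ε i * t i + 2 * k * d i (m i) := by exact_mod_cast hd i (m i)
    simp only [Equiv.piCongrRight_apply, Pi.map_apply]
    rw [h]
    rcases hε i with h' | h' <;> rw [h'] <;> push_cast <;> ring
  rw [key]
  push_cast
  ring
end

section
/- Let k ≥ 1 and n be natural numbers, and let ε : Fin n → ℤ satisfy ε_i ∈ {1,−1} for all i. Set σ = Σ_i ε_i. Then (2k)^{−n/2} · e^{iπσ/4} · Σ_{m} exp(−(2πi/(4k)) Σ_i ε_i m_i²) = 1, where the sum runs over all functions m : Fin n → {0,1,…,2k−1}. Consequently, if M₀ is a homology 3-sphere, its U(1) Reshetikhin–Turaev invariant satisfies I_k(M₀) = 1. -/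
open Complex Finset

lemma rt_cpow_mul (r : ℝ) (hr : 0 < r) (z : ℂ) (hz : z ≠ 0) (c : ℂ) :
    ((r : ℂ) * z) ^ c = (r : ℂ) ^ c * z ^ c := by
  have hr0 : (r : ℂ) ≠ 0 := ofReal_ne_zero.2 hr.ne'
  rw [cpow_def_of_ne_zero (mul_ne_zero hr0 hz), cpow_def_of_ne_zero hr0, cpow_def_of_ne_zero hz,
    ← Complex.exp_add, log_ofReal_mul hr hz, ofReal_log hr.le]
  congr 1; ring

open Filter Topology HurwitzZeta in
lemma rt_theta_split (k : ℕ) (hk : 1 ≤ k) (t : ℝ) (ht : 0 < t) :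
    jacobiTheta (1 / (2 * k : ℂ) + I * t) = ∑ m : Fin (2 * k),
      cexp (Real.pi * I * (m : ℕ) ^ 2 / (2 * k)) *
        (evenKernel (((m : ℕ) / (2 * k) : ℝ) : UnitAddCircle) ((2 * k) ^ 2 * t) : ℂ) := by
  have : NeZero (2 * k) := ⟨by omega⟩
  have hk0 : (k : ℂ) ≠ 0 := by exact_mod_cast (by omega : k ≠ 0)
  have hk1 : (0 : ℝ) < k := by exact_mod_cast hk
  have him : 0 < (1 / (2 * k : ℂ) + I * t).im := by
    have : (1 / (2 * k : ℂ)) = ((1 / (2 * k) : ℝ) : ℂ) := by push_cast; rfl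
    rw [this, add_im, ofReal_im]; simpa using ht
  have h := hasSum_jacobiTheta₂_term 0 him
  rw [← jacobiTheta_eq_jacobiTheta₂, ← (Int.divModEquiv (2 * k)).symm.hasSum_iff,
    ← (Equiv.prodComm (Fin (2 * k)) ℤ).hasSum_iff] at h
  refine (h.prod_fiberwise (g := fun m : Fin (2 * k) => cexp (Real.pi * I * (m : ℕ) ^ 2 / (2 * k)) *
        (evenKernel (((m : ℕ) / (2 * k) : ℝ) : UnitAddCircle) ((2 * k) ^ 2 * t) : ℂ))
        (fun m => ?_)).unique (hasSum_fintype _)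
  have h2 := hasSum_int_evenKernel ((m : ℕ) / (2 * k) : ℝ) (t := (2 * k) ^ 2 * t) (by positivity)
  rw [← hasSum_ofReal] at h2
  convert! h2.mul_left (cexp (Real.pi * I * (m : ℕ) ^ 2 / (2 * k))) using 2 with j
  simp only [Function.comp, Equiv.prodComm_apply, Prod.swap_prod_mk, Int.divModEquiv_symm_apply,
    jacobiTheta₂_term]
  push_cast
  rw [← Complex.exp_add, Complex.exp_eq_exp_iff_exists_int]
  refine ⟨k * j ^ 2 + j * (m : ℕ), ?_⟩
  push_cast
  field_simp
  ring_nf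
  simp only [I_sq]
  ring

lemma rt_theta_S (τ : ℂ) (hτ : 0 < τ.im) :
    jacobiTheta (-1 / τ) = (-I * τ) ^ (1 / 2 : ℂ) * jacobiTheta τ := by
  have := jacobiTheta_S_smul ⟨τ, hτ⟩
  rw [UpperHalfPlane.modular_S_smul] at this
  simpa [neg_div, ← neg_inv] using this

lemma rt_theta_per (k : ℕ) (τ : ℂ) : jacobiTheta (τ + 2 * k) = jacobiTheta τ := by
  induction k with
  | zero => simp
  | succ k ih => rw [← ih, ← jacobiTheta_two_add (τ + 2 * k)]; congr 1; push_cast; ring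

open Filter Topology HurwitzZeta in
lemma rt_key (k : ℕ) (hk : 1 ≤ k) (s : ℝ) (hs : 0 < s) :
    (-I / (2 * k) + ((1 / ((2 * k) ^ 2 * s) : ℝ) : ℂ)) ^ (1 / 2 : ℂ) *
      (1 + I * ((1 / (2 * k * s) : ℝ) : ℂ))⁻¹ ^ (1 / 2 : ℂ) *
    ∑ m : Fin (2 * k), cexp (Real.pi * I * (m : ℕ) ^ 2 / (2 * k)) *
        (cosKernel (((m : ℕ) / (2 * k) : ℝ) : UnitAddCircle) s : ℂ) =
    jacobiTheta (I * s + ((- 1 / (2 * k) : ℝ) : ℂ)) := by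
  have hk1 : (0 : ℝ) < k := by exact_mod_cast hk
  have hk0 : (k : ℂ) ≠ 0 := by exact_mod_cast (by omega : k ≠ 0)
  have hs0 : (s : ℂ) ≠ 0 := by exact_mod_cast hs.ne'
  set t : ℝ := 1 / ((2 * k) ^ 2 * s) with htdef
  have ht : 0 < t := by positivity
  have h1 := rt_theta_split k hk t ht
  set τ : ℂ := 1 / (2 * k : ℂ) + I * t with hτdef
  have him : 0 < τ.im := by
    have : (1 / (2 * k : ℂ)) = ((1 / (2 * k) : ℝ) : ℂ) := by push_cast; rfl
    rw [hτdef, this, add_im, ofReal_im]; simpa using ht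
  have hτ0 : τ ≠ 0 := by rintro h; simp [h] at him
  set w : ℂ := I * s + ((- 1 / (2 * k) : ℝ) : ℂ) with hwdef
  have hwim : 0 < w.im := by rw [hwdef, add_im, ofReal_im]; simpa using hs
  have hw0 : w ≠ 0 := by rintro h; simp [h] at hwim
  have hww : -1 / τ + 2 * k = -1 / w := by
    rw [div_add' _ _ _ hτ0, div_eq_div_iff hτ0 hw0, hτdef, hwdef, htdef]
    push_cast
    field_simp
    ring_nf
    simp only [I_sq]
    ring
  have hw' : 0 < (-1 / w).im := by
    rw [neg_div, neg_im, one_div, inv_im]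
    have := Complex.normSq_pos.2 hw0
    rw [neg_div, neg_neg]; positivity
  have h2 := rt_theta_S τ him
  rw [← rt_theta_per k, hww] at h2
  have h3 := rt_theta_S _ hw'
  rw [h2, h1] at h3
  have e1 : -1 / (-1 / w) = w := by field_simp
  rw [e1] at h3
  rw [h3]
  have e2 : -I * τ = -I / (2 * k) + (t : ℂ) := by
    rw [hτdef]; ring_nf; simp only [I_sq]; ring
  have hd : 1 + I * ((1 / (2 * k * s) : ℝ) : ℂ) ≠ 0 := by
    intro h
    have := congrArg re h
    rw [add_re, re_mul_ofReal] at this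
    simp at this
  have e3 : -I * (-1 / w) = ((1 / s : ℝ) : ℂ) * (1 + I * ((1 / (2 * k * s) : ℝ) : ℂ))⁻¹ := by
    have : w = I * s * (1 + I * ((1 / (2 * k * s) : ℝ) : ℂ)) := by
      rw [hwdef]; push_cast; field_simp; ring_nf; simp only [I_sq]; ring
    rw [this]
    push_cast at hd ⊢
    field_simp
  have e4 : (-I * (-1 / w)) ^ (1 / 2 : ℂ) = ((1 / s : ℝ) : ℂ) ^ (1 / 2 : ℂ) *
      (1 + I * ((1 / (2 * k * s) : ℝ) : ℂ))⁻¹ ^ (1 / 2 : ℂ) := by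
    rw [e3, rt_cpow_mul _ (by positivity) _ (inv_ne_zero hd)]
  rw [e2, e4]
  have e5 : ∀ m : Fin (2 * k), (evenKernel (((m : ℕ) / (2 * k) : ℝ) : UnitAddCircle)
      ((2 * k) ^ 2 * t) : ℂ) = (((1 / s : ℝ) : ℂ) ^ (1 / 2 : ℂ))⁻¹ *
      (cosKernel (((m : ℕ) / (2 * k) : ℝ) : UnitAddCircle) s : ℂ) := by
    intro m
    have e : (2 * k) ^ 2 * t = 1 / s := by rw [htdef]; field_simp
    rw [evenKernel_functional_equation, e, one_div_one_div, ofReal_mul, ofReal_div,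
      ofReal_cpow (by positivity)]
    push_cast; simp
  have hne : ((1 / s : ℝ) : ℂ) ^ (1 / 2 : ℂ) ≠ 0 := by
    rw [Ne, cpow_eq_zero_iff]; push_cast; simp [hs0]
  simp only [e5, mul_left_comm _ ((((1 / s : ℝ) : ℂ) ^ (1 / 2 : ℂ))⁻¹), ← Finset.mul_sum]
  field_simp

open Filter Topology HurwitzZeta in
lemma rt_limit (k : ℕ) (hk : 1 ≤ k) :
    (-I / (2 * k)) ^ (1 / 2 : ℂ) *
    ∑ m : Fin (2 * k), cexp (Real.pi * I * (m : ℕ) ^ 2 / (2 * k)) = 1 := by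
  have hk1 : (0 : ℝ) < k := by exact_mod_cast hk
  have c1 : Tendsto (fun s : ℝ => jacobiTheta (I * s + ((- 1 / (2 * k) : ℝ) : ℂ))) atTop (𝓝 1) := by
    have hi : ∀ s : ℝ, (I * s + ((- 1 / (2 * k) : ℝ) : ℂ)).im = s := by
      intro s; rw [add_im, ofReal_im]; simp
    have h : Tendsto (fun s : ℝ => I * s + ((- 1 / (2 * k) : ℝ) : ℂ)) atTop (comap im atTop) := by
      rw [tendsto_comap_iff]
      refine tendsto_id.congr fun s => (hi s).symm
    have h2 := (isBigO_at_im_infty_jacobiTheta_sub_one.comp_tendsto h).trans_tendsto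
      (by
        simp only [Function.comp_def, hi]
        exact Real.tendsto_exp_atBot.comp
          (tendsto_id.const_mul_atTop_of_neg (neg_lt_zero.2 Real.pi_pos)))
    simpa using h2.add_const 1
  have c2 : ∀ a : UnitAddCircle, Tendsto (fun s : ℝ => (cosKernel a s : ℂ)) atTop (𝓝 1) := by
    intro a
    obtain ⟨p, hp, h⟩ := isBigO_atTop_cosKernel_sub a
    have h2 := h.trans_tendsto (Real.tendsto_exp_atBot.comp
          (tendsto_id.const_mul_atTop_of_neg (neg_lt_zero.2 hp)))
    have h3 : Tendsto (fun s => cosKernel a s) atTop (𝓝 1) := by simpa using h2.add_const 1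
    exact_mod_cast (continuous_ofReal.tendsto _).comp h3
  have c3 : ∀ c : ℝ, 0 < c → Tendsto (fun s : ℝ => ((1 / (c * s) : ℝ) : ℂ)) atTop (𝓝 0) := by
    intro c hc
    have : Tendsto (fun s : ℝ => 1 / (c * s)) atTop (𝓝 0) :=
      tendsto_const_nhds.div_atTop (tendsto_id.const_mul_atTop hc)
    exact_mod_cast (continuous_ofReal.tendsto _).comp this
  have c4 : Tendsto (fun s : ℝ => (-I / (2 * k) + ((1 / ((2 * k) ^ 2 * s) : ℝ) : ℂ)) ^ (1 / 2 : ℂ))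
      atTop (𝓝 ((-I / (2 * k)) ^ (1 / 2 : ℂ))) := by
    have := (c3 ((2 * k) ^ 2) (by positivity)).const_add (-I / (2 * k))
    rw [add_zero] at this
    refine this.cpow tendsto_const_nhds (Or.inr ?_)
    have : (-I / (2 * k) : ℂ) = -I * ((1 / (2 * k) : ℝ) : ℂ) := by push_cast; ring
    rw [this, im_mul_ofReal]
    simp; omega
  have c5 : Tendsto (fun s : ℝ => (1 + I * ((1 / (2 * k * s) : ℝ) : ℂ))⁻¹ ^ (1 / 2 : ℂ))
      atTop (𝓝 1) := by
    have := (((c3 (2 * k) (by positivity)).const_mul I).const_add 1).inv₀ (by simp)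
    have := this.cpow (tendsto_const_nhds (x := (1 / 2 : ℂ))) (by simp)
    simpa using this
  have c6 := (c4.mul c5).mul (tendsto_finsetSum Finset.univ (fun (m : Fin (2 * k)) _ =>
    (c2 (((m : ℕ) / (2 * k) : ℝ) : UnitAddCircle)).const_mul
      (cexp (Real.pi * I * (m : ℕ) ^ 2 / (2 * k)))))
  have := tendsto_nhds_unique (c6.congr' ?_) c1
  · simpa using this
  · filter_upwards [eventually_gt_atTop 0] with s hs
    exact rt_key k hk s hs

lemma rt_gauss (k : ℕ) (hk : 1 ≤ k) :
    ∑ m : Fin (2 * k), cexp (Real.pi * I * (m : ℕ) ^ 2 / (2 * k)) =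
      (Real.sqrt (2 * k) : ℂ) * cexp (Real.pi * I / 4) := by
  have hk1 : (0 : ℝ) < k := by exact_mod_cast hk
  have h := rt_limit k hk
  have e : (-I / (2 * k) : ℂ) ^ (1 / 2 : ℂ) =
      ((Real.sqrt (2 * k) : ℂ) * cexp (Real.pi * I / 4))⁻¹ := by
    have : (-I / (2 * k) : ℂ) = ((1 / (2 * k) : ℝ) : ℂ) * (-I) := by push_cast; ring
    rw [this, rt_cpow_mul _ (by positivity) _ (by simp), mul_inv]
    congr 1
    · rw [Real.sqrt_eq_rpow, ← ofReal_inv, ← Real.inv_rpow (by positivity),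
        ofReal_cpow (by positivity)]
      push_cast; simp
    · rw [cpow_def_of_ne_zero (by simp), log_neg_I, ← Complex.exp_neg]
      congr 1; ring
  rw [e] at h
  have hne : (Real.sqrt (2 * k) : ℂ) * cexp (Real.pi * I / 4) ≠ 0 := by
    refine mul_ne_zero ?_ (exp_ne_zero _)
    rw [ofReal_ne_zero]; positivity
  rwa [inv_mul_eq_iff_eq_mul₀ hne, mul_one] at h

lemma rt_one (k : ℕ) (hk : 1 ≤ k) (e : ℤ) (he : e = 1 ∨ e = -1) :
    ∑ m : Fin (2 * k), cexp (-(2 * Real.pi * I / (4 * (k : ℂ))) * (e * (m : ℕ) ^ 2)) =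
      (Real.sqrt (2 * k) : ℂ) * cexp (-(Real.pi * I * e / 4)) := by
  have h := rt_gauss k hk
  have hk0 : (k : ℂ) ≠ 0 := by exact_mod_cast (by omega : k ≠ 0)
  rcases he with rfl | rfl
  · have h2 := congrArg (starRingEnd ℂ) h
    rw [map_sum, map_mul, conj_ofReal, ← exp_conj] at h2
    simp only [← exp_conj] at h2
    convert h2 using 4
    all_goals
      simp [map_ofNat]
      try field_simp
      try ring
  · convert h using 4
    all_goals
      push_cast
      field_simp
      try ring

/-- For a surgery presentation of a homology 3-sphere by an algebraically split link
with surgery coefficients `ε i = ±1` (linking matrix diagonal with entries `ε i`,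
signature `σ = Σ_i ε i`), the `U(1)` Reshetikhin–Turaev invariant equals `1`:
`(2k)^{-n/2} e^{iπσ/4} Σ_m exp(-(2πi/(4k)) Σ_i ε_i m_i²) = 1`, the sum running over
all colour assignments `m : Fin n → {0,…,2k-1}`. -/
theorem rt_invariant_homology_sphere (k n : ℕ) (hk : 1 ≤ k)
    (ε : Fin n → ℤ) (hε : ∀ i, ε i = 1 ∨ ε i = -1)
    (σ : ℤ) (hσ : σ = ∑ i : Fin n, ε i) :
    ((Real.sqrt (2 * k) : ℂ) ^ n)⁻¹ *
      Complex.exp (Real.pi * Complex.I * (σ : ℂ) / 4) *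
      (∑ m : Fin n → Fin (2 * k),
        Complex.exp (-(2 * Real.pi * Complex.I / (4 * (k : ℂ))) *
          (∑ i : Fin n, (ε i : ℂ) * ((m i : ℕ) : ℂ) ^ 2))) = 1 := by
  have hk1 : (0 : ℝ) < k := by exact_mod_cast hk
  have hc : ∀ m : Fin n → Fin (2 * k), Complex.exp (-(2 * Real.pi * Complex.I / (4 * (k : ℂ))) *
          (∑ i : Fin n, (ε i : ℂ) * ((m i : ℕ) : ℂ) ^ 2)) = ∏ i, cexp (-(2 * Real.pi * I / (4 * (k : ℂ))) * (ε i * (m i : ℕ) ^ 2)) := by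
    intro m
    rw [Finset.mul_sum, Complex.exp_sum]
  simp only [hc]
  rw [← Fintype.prod_sum (fun (i : Fin n) (m : Fin (2 * k)) =>
    cexp (-(2 * Real.pi * I / (4 * (k : ℂ))) * (ε i * (m : ℕ) ^ 2)))]
  simp only [rt_one k hk _ (hε _)]
  rw [Finset.prod_mul_distrib, ← Complex.exp_sum]
  have hne : (Real.sqrt (2 * k) : ℂ) ≠ 0 := by
    rw [ofReal_ne_zero]; positivity
  have : ∑ i, -((Real.pi : ℂ) * I * ε i / 4) = -(Real.pi * I * σ / 4) := by
    rw [hσ, Finset.sum_neg_distrib, ← Finset.sum_div, ← Finset.mul_sum]; push_cast; rfl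
  rw [this, Complex.exp_neg]
  have := Complex.exp_ne_zero (Real.pi * I * σ / 4)
  rw [Finset.prod_const, Finset.card_univ, Fintype.card_fin]
  field_simp
end

section
/- Let k ≥ 1, let 𝕃 be an N×N symmetric integer matrix, and let E be an N×N integer matrix with det E = 1 or det E = −1. Then Σ_{m} exp(−(πi/(2k)) Σ_{ij} m_i (Eᵀ𝕃E)_{ij} m_j) = Σ_{m} exp(−(πi/(2k)) Σ_{ij} m_i 𝕃_{ij} m_j), where both sums run over all functions m : Fin N → {0,1,…,2k−1}. That is, the colour-summed Gauss sum entering the U(1) Reshetikhin–Turaev invariant is invariant under unimodular congruence of the linking matrix, which is the algebraic content of handle-slide (Kirby move) invariance. -/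
open Complex Finset Matrix

lemma kq_per (k N : ℕ) (hk : 1 ≤ k) (L : Matrix (Fin N) (Fin N) ℤ) (hL : L.IsSymm)
    (v w : Fin N → ℤ) (h : ∀ i, (2 * k : ℤ) ∣ v i - w i) :
    Complex.exp (-(Real.pi * Complex.I / (2 * (k : ℂ))) * ((v ⬝ᵥ L *ᵥ v : ℤ) : ℂ)) =
    Complex.exp (-(Real.pi * Complex.I / (2 * (k : ℂ))) * ((w ⬝ᵥ L *ᵥ w : ℤ) : ℂ)) := by
  choose u hu using h
  have hv : v = w + (2 * k : ℤ) • u := by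
    funext i
    have := hu i
    simp only [Pi.add_apply, Pi.smul_apply, smul_eq_mul]
    linarith
  have hs : u ⬝ᵥ L *ᵥ w = w ⬝ᵥ L *ᵥ u := by
    rw [Matrix.dotProduct_mulVec, ← Matrix.mulVec_transpose, hL.eq, dotProduct_comm]
  have hq : v ⬝ᵥ L *ᵥ v = w ⬝ᵥ L *ᵥ w + 4 * k * (w ⬝ᵥ L *ᵥ u + k * (u ⬝ᵥ L *ᵥ u)) := by
    rw [hv]
    simp only [Matrix.mulVec_add, Matrix.mulVec_smul, dotProduct_add, add_dotProduct,
      smul_dotProduct, dotProduct_smul, smul_eq_mul, hs]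
    ring
  have hk0 : (k : ℂ) ≠ 0 := by
    have : k ≠ 0 := by omega
    exact_mod_cast this
  rw [hq, Complex.exp_eq_exp_iff_exists_int]
  refine ⟨-(w ⬝ᵥ L *ᵥ u + k * (u ⬝ᵥ L *ᵥ u)), ?_⟩
  push_cast
  field_simp
  ring

lemma kq_cast {N n : ℕ} (L : Matrix (Fin N) (Fin N) ℤ) (m : Fin N → Fin n) :
    (∑ i : Fin N, ∑ j : Fin N, ((m i : ℕ) : ℂ) * ((L i j : ℤ) : ℂ) * ((m j : ℕ) : ℂ)) =
    (((fun i => ((m i : ℕ) : ℤ)) ⬝ᵥ L *ᵥ (fun i => ((m i : ℕ) : ℤ)) : ℤ) : ℂ) := by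
  simp only [dotProduct, Matrix.mulVec, Finset.mul_sum]
  push_cast
  simp only [mul_assoc]

/-- Handle-slide (second Kirby move) invariance of the colour-summed Gauss sum:
for an `N × N` symmetric integer matrix `𝕃` and a unimodular integer matrix `E`
(`det E = ±1`), the sum over all colour vectors `m : Fin N → {0,…,2k-1}` of
`exp(-(πi/(2k)) mᵀ (Eᵀ𝕃E) m)` equals the corresponding sum for `𝕃`. -/
theorem kirby_handle_slide_invariance (k N : ℕ) (hk : 1 ≤ k)
    (𝕃 : Matrix (Fin N) (Fin N) ℤ) (h𝕃 : 𝕃.IsSymm)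
    (E : Matrix (Fin N) (Fin N) ℤ) (hE : E.det = 1 ∨ E.det = -1) :
    (∑ m : Fin N → Fin (2 * k),
        Complex.exp (-(Real.pi * Complex.I / (2 * (k : ℂ))) *
          (∑ i : Fin N, ∑ j : Fin N,
            ((m i : ℕ) : ℂ) * (((Eᵀ * 𝕃 * E) i j : ℤ) : ℂ) * ((m j : ℕ) : ℂ)))) =
    (∑ m : Fin N → Fin (2 * k),
        Complex.exp (-(Real.pi * Complex.I / (2 * (k : ℂ))) *
          (∑ i : Fin N, ∑ j : Fin N,
            ((m i : ℕ) : ℂ) * ((𝕃 i j : ℤ) : ℂ) * ((m j : ℕ) : ℂ)))) := by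
  have hn : (0 : ℤ) < 2 * k := by omega
  have hlt : ∀ z : ℤ, (z % (2 * k)).toNat < 2 * k := by
    intro z
    have h1 := Int.emod_nonneg z hn.ne'
    have h2 := Int.emod_lt_of_pos z hn
    omega
  let c : (Fin N → Fin (2 * k)) → Fin N → ℤ := fun m i => ((m i : ℕ) : ℤ)
  let e : (Fin N → Fin (2 * k)) → (Fin N → Fin (2 * k)) :=
    fun m i => ⟨((E *ᵥ c m) i % (2 * k)).toNat, hlt _⟩
  have hce : ∀ m i, c (e m) i = (E *ᵥ c m) i % (2 * k) := by
    intro m i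
    exact Int.toNat_of_nonneg (Int.emod_nonneg _ hn.ne')
  have hinj : Function.Injective e := by
    intro m m' hm
    have h1 : ∀ i, (2 * k : ℤ) ∣ (E *ᵥ (c m - c m')) i := by
      intro i
      have := hce m i
      rw [hm, hce m' i] at this
      rw [Matrix.mulVec_sub, Pi.sub_apply]
      exact Int.ModEq.dvd this
    have h2 : ∀ i, (2 * k : ℤ) ∣ (E.adjugate *ᵥ (E *ᵥ (c m - c m'))) i := by
      intro i
      rw [Matrix.mulVec, dotProduct]
      exact Finset.dvd_sum fun j _ => Dvd.dvd.mul_left (h1 j) _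
    funext i
    have h3 := h2 i
    rw [Matrix.mulVec_mulVec, Matrix.adjugate_mul, Matrix.smul_mulVec, Matrix.one_mulVec] at h3
    have h4 : (2 * k : ℤ) ∣ c m i - c m' i := by
      rcases hE with h | h <;> rw [h] at h3
      · simpa using h3
      · simpa using (dvd_neg.mpr h3)
    have a := (m i).isLt
    have b := (m' i).isLt
    have h5 : c m i - c m' i = 0 := by
      apply Int.eq_zero_of_abs_lt_dvd h4
      rw [abs_lt]
      simp only [c]
      constructor <;> omega
    apply Fin.ext
    simp only [c] at h5
    omega
  refine Fintype.sum_bijective e (Finite.injective_iff_bijective.mp hinj) _ _ ?_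
  intro m
  rw [kq_cast, kq_cast]
  have hE' : (c m ⬝ᵥ (Eᵀ * 𝕃 * E) *ᵥ c m) = (E *ᵥ c m) ⬝ᵥ 𝕃 *ᵥ (E *ᵥ c m) := by
    rw [← Matrix.mulVec_mulVec, ← Matrix.mulVec_mulVec, Matrix.dotProduct_mulVec,
      Matrix.vecMul_transpose]
  change Complex.exp (_ * ((c m ⬝ᵥ (Eᵀ * 𝕃 * E) *ᵥ c m : ℤ) : ℂ)) =
    Complex.exp (_ * ((c (e m) ⬝ᵥ 𝕃 *ᵥ c (e m) : ℤ) : ℂ))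
  rw [hE']
  apply kq_per k N hk 𝕃 h𝕃
  intro i
  rw [hce]
  exact Int.dvd_self_sub_emod
end

section
/- Let k ≥ 1, let 𝕃 be an N×N symmetric integer matrix, and let ε ∈ {1,−1}. Let 𝕃′ = 𝕃 ⊕ (ε) be the (N+1)×(N+1) block matrix extending 𝕃 by a new index with diagonal entry ε and zero off-diagonal entries. Define the signature σ(A) of a symmetric integer matrix A as the number of positive eigenvalues minus the number of negative eigenvalues of A regarded as a real symmetric matrix. Then (2k)^{−(N+1)/2} · e^{iπσ(𝕃′)/4} · Σ_{m′} exp(−(2πi/(4k)) m′^T 𝕃′ m′) = (2k)^{−N/2} · e^{iπσ(𝕃)/4} · Σ_{m} exp(−(2πi/(4k)) m^T 𝕃 m), where m′ ranges over {0,…,2k−1}^{N+1} and m over {0,…,2k−1}^N. That is, the U(1) Reshetikhin–Turaev expression is invariant under stabilization of the surgery link by a distant unknot with framing ±1 (first Kirby move). -/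
open Complex Finset Matrix

/-- The signature of a symmetric integer matrix `A`, viewed as a real symmetric
matrix: the number of positive eigenvalues minus the number of negative eigenvalues. -/
noncomputable def intMatrixSignature {n : Type*} [Fintype n] [DecidableEq n]
    (A : Matrix n n ℤ) (hA : (A.map ((↑) : ℤ → ℝ)).IsHermitian) : ℤ :=
  ((Finset.univ.filter fun i => 0 < hA.eigenvalues i).card : ℤ) -
    ((Finset.univ.filter fun i => hA.eigenvalues i < 0).card : ℤ)

theorem kaux_shift (n : ℕ) (h2 : Even n) (hn : 0 < n) (j : ℤ) :
    ∑ r ∈ range n, cexp (-(Real.pi * I * ((r:ℂ) - j)^2 / n)) =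
    ∑ r ∈ range n, cexp (-(Real.pi * I * (r:ℂ)^2 / n)) := by
  have hn' : (n:ℂ) ≠ 0 := by exact_mod_cast hn.ne'
  obtain ⟨k, rfl⟩ := h2
  have step : ∀ j : ℂ, (∃ z : ℤ, j = z) →
      ∑ r ∈ range (k+k), cexp (-(Real.pi * I * ((r:ℂ) + j + 1)^2 / (k+k : ℕ))) =
      ∑ r ∈ range (k+k), cexp (-(Real.pi * I * ((r:ℂ) + j)^2 / (k+k : ℕ))) := by
    rintro j ⟨z, rfl⟩
    have h1 := Finset.sum_range_succ (fun r : ℕ => cexp (-(Real.pi * I * ((r:ℂ) + z)^2 / (k+k : ℕ)))) (k+k)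
    have h2 := Finset.sum_range_succ' (fun r : ℕ => cexp (-(Real.pi * I * ((r:ℂ) + z)^2 / (k+k : ℕ)))) (k+k)
    have h3 : cexp (-(Real.pi * I * (((k+k : ℕ):ℂ) + z)^2 / (k+k : ℕ))) =
        cexp (-(Real.pi * I * (((0 : ℕ):ℂ) + z)^2 / (k+k : ℕ))) := by
      rw [Complex.exp_eq_exp_iff_exists_int]
      refine ⟨-(k + z), ?_⟩
      field_simp
      push_cast
      ring
    rw [h1, h3] at h2
    have := add_right_cancel h2
    rw [this]
    refine sum_congr rfl fun r _ => ?_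
    congr 3
    push_cast
    ring
  have key : ∀ z : ℤ, ∑ r ∈ range (k+k), cexp (-(Real.pi * I * ((r:ℂ) + z)^2 / (k+k : ℕ))) =
      ∑ r ∈ range (k+k), cexp (-(Real.pi * I * (r:ℂ)^2 / (k+k : ℕ))) := by
    intro z
    induction z with
    | zero => simp
    | succ i ih =>
      rw [← ih, ← step (i:ℤ) ⟨_, rfl⟩]
      push_cast; simp only [add_assoc]
    | pred i ih =>
      rw [← ih, ← step ((-i-1:ℤ)) ⟨_, rfl⟩]
      push_cast
      refine sum_congr rfl fun r _ => ?_
      congr 4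
      ring
  have := key (-j)
  rw [← this]
  push_cast
  simp only [sub_eq_add_neg]

theorem kaux_step1 (n : ℕ) (h2 : Even n) (hn : 0 < n) :
    (∑ r ∈ range n, cexp (-(Real.pi * I * (r:ℂ)^2 / n))) * jacobiTheta (1/n + I) =
    ∑ r ∈ range n, cexp (-(Real.pi * I * (r:ℂ)^2 / n)) * jacobiTheta₂ (r/n) I := by
  have hn' : (n:ℂ) ≠ 0 := by exact_mod_cast hn.ne'
  have hI : 0 < I.im := by simp
  have hs : HasSum (fun j : ℤ => ∑ r ∈ range n, cexp (-(Real.pi * I * (r:ℂ)^2 / n)) * jacobiTheta₂_term j (r/n) I)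
      (∑ r ∈ range n, cexp (-(Real.pi * I * (r:ℂ)^2 / n)) * jacobiTheta₂ (r/n) I) :=
    hasSum_sum fun r _ => (hasSum_jacobiTheta₂_term (r/n) hI).mul_left _
  rw [← hs.tsum_eq, jacobiTheta, ← tsum_mul_left]
  refine tsum_congr fun j => ?_
  rw [← kaux_shift n h2 hn j, sum_mul]
  refine sum_congr rfl fun r _ => ?_
  rw [jacobiTheta₂_term, ← Complex.exp_add, ← Complex.exp_add]
  congr 1
  field_simp
  ring

theorem kaux_step2 (x : ℂ) : HasSum (fun l : ℤ => cexp (-Real.pi * (x + l)^2)) (jacobiTheta₂ x I) := by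
  have hI : 0 < I.im := by simp
  have h := jacobiTheta₂_functional_equation (-x) I
  have e1 : (-I * I) = 1 := by simp
  have e2 : -1 / I = I := by simp
  rw [jacobiTheta₂_neg_left, e1, e2, one_cpow] at h
  rw [h]
  convert! (hasSum_jacobiTheta₂_term (-x/I) hI).mul_left (1 / 1 * cexp (-Real.pi * I * (-x)^2/I)) using 2 with l
  rw [jacobiTheta₂_term, div_one, one_mul, ← Complex.exp_add]
  congr 1
  field_simp
  ring_nf
  simp
  ring

theorem kaux_step3 (n : ℕ) (h2 : Even n) (hn : 0 < n) :
    ∑ r ∈ range n, cexp (-(Real.pi * I * (r:ℂ)^2 / n)) * jacobiTheta₂ (r/n) I =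
      jacobiTheta (-1/n + I/n^2) := by
  have hn' : (n:ℂ) ≠ 0 := by exact_mod_cast hn.ne'
  have hnp : (0:ℝ) < n := by exact_mod_cast hn
  have : NeZero n := ⟨hn.ne'⟩
  have him : 0 < (-1/(n:ℂ) + I/(n:ℂ)^2).im := by
    have : (-1/(n:ℂ) + I/(n:ℂ)^2) = ((-1/n : ℝ) : ℂ) + ((1/n^2 : ℝ):ℂ) * I := by
      push_cast; ring
    rw [this, add_im, ofReal_im, im_ofReal_mul, I_im]
    positivity
  have hs := hasSum_jacobiTheta₂_term 0 him
  rw [← jacobiTheta_eq_jacobiTheta₂] at hs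
  have hs2 := (Int.divModEquiv n).symm.hasSum_iff.mpr hs
  have hs3 := (Equiv.prodComm (Fin n) ℤ).hasSum_iff.mpr hs2
  have hs4 := hs3.prod_fiberwise (g := fun r : Fin n => cexp (-(Real.pi * I * (r:ℂ)^2 / n)) * jacobiTheta₂ (r/n) I) ?_
  · rw [Finset.sum_range (fun r : ℕ => cexp (-(Real.pi * I * (r:ℂ)^2 / n)) * jacobiTheta₂ (r/n) I)]
    exact (hasSum_fintype _).unique hs4
  · intro r
    convert! (kaux_step2 ((r:ℕ)/n : ℂ)).mul_left (cexp (-(Real.pi * I * (r:ℂ)^2 / n))) using 2 with l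
    obtain ⟨k, hk⟩ := h2
    have hk' : (n:ℂ) = 2 * k := by rw [hk]; push_cast; ring
    simp [jacobiTheta₂_term, Int.divModEquiv]
    rw [← Complex.exp_add, Complex.exp_eq_exp_iff_exists_int]
    refine ⟨-(l * r + k * l^2), ?_⟩
    push_cast
    have hk0 : (k:ℂ) ≠ 0 := by rintro h; simp [h] at hk'; exact hn.ne' hk'
    rw [hk']
    field_simp
    ring_nf
    simp
    ring

theorem kaux_step4 (n : ℕ) (h2 : Even n) (hn : 0 < n) :
    jacobiTheta (-1/n + I/n^2) =
     (Real.sqrt n : ℂ) * cexp (-(Real.pi * I / 4)) * jacobiTheta (1/n + I) := by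
  have hn' : (n:ℂ) ≠ 0 := by exact_mod_cast hn.ne'
  have hnI : (n:ℂ) - I ≠ 0 := by
    intro h; have := congrArg im h; simp at this
  have hnI2 : -(n:ℂ) + I ≠ 0 := by
    intro h; have := congrArg im h; simp at this
  have per : ∀ (m : ℕ) τ, jacobiTheta (τ + (m+m : ℕ)) = jacobiTheta τ := by
    intro m τ
    induction m with
    | zero => simp
    | succ m ih =>
      rw [← ih, ← jacobiTheta_two_add (τ + (m+m:ℕ))]
      congr 1; push_cast; ring
  obtain ⟨k, hk⟩ := h2
  have f1 := jacobiTheta₂_functional_equation 0 (-1/n + I/n^2)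
  have f2 := jacobiTheta₂_functional_equation 0 (I*n/(n-I))
  simp only [zero_div, ← jacobiTheta_eq_jacobiTheta₂] at f1 f2
  have e1 : -1/(-1/n + I/n^2 : ℂ) = I*n/(n-I) + (k+k:ℕ) := by
    rw [← hk]
    have : (-1/n + I/n^2 : ℂ) = (-n+I)/n^2 := by field_simp
    rw [this]
    field_simp
    ring_nf
    try simp
    try ring
  have e2 : -1/(I*n/(n-I) : ℂ) = 1/n + I := by
    field_simp
    ring_nf
    simp
    try ring
  rw [e1, per] at f1
  rw [e2] at f2
  rw [f1, f2]
  set a := -I * (-1/n + I/n^2 : ℂ) with ha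
  set b := -I * (I*n/(n-I) : ℂ) with hb
  have hnp : (0:ℝ) < n := by exact_mod_cast hn
  have hra : 0 < a.re := by
    have : a = ((1/n^2 : ℝ):ℂ) + ((1/n : ℝ):ℂ) * I := by
      rw [ha]; push_cast; field_simp; ring_nf; simp; try ring
    rw [this, add_re, ofReal_re, re_ofReal_mul, I_re]; positivity
  have hrb : 0 < b.re := by
    have : b = ((n^2/(n^2+1) : ℝ):ℂ) + ((n/(n^2+1) : ℝ):ℂ) * I := by
      have : (n:ℂ)^2+1 ≠ 0 := by norm_cast
      rw [hb]; push_cast; field_simp; ring_nf; simp; try ring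
    rw [this, add_re, ofReal_re, re_ofReal_mul, I_re]; positivity
  have hab : a * b = ((1/n : ℝ):ℂ) * I := by
    have : a = I * (n - I)/n^2 := by
      rw [ha]; field_simp; ring
    rw [this, hb]; push_cast; field_simp; simp
  have ha0 : a ≠ 0 := by intro h; simp [h] at hra
  have hb0 : b ≠ 0 := by intro h; simp [h] at hrb
  have hlog : Complex.log a + Complex.log b = Complex.log (a*b) := by
    rw [Complex.log_mul ha0 hb0]
    have h1 := abs_lt.1 (Complex.abs_arg_lt_pi_div_two_iff.2 (Or.inl hra))
    have h2 := abs_lt.1 (Complex.abs_arg_lt_pi_div_two_iff.2 (Or.inl hrb))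
    constructor <;> linarith [h1.1, h1.2, h2.1, h2.2]
  have hlog2 : Complex.log (a*b) = -(Real.log n : ℂ) + Real.pi/2 * I := by
    rw [hab, Complex.log_ofReal_mul (by positivity) I_ne_zero, Complex.log_I]
    simp
  have hsq : (Real.sqrt n : ℂ) = cexp (Real.log n / 2) := by
    rw [Real.sqrt_eq_rpow, Real.rpow_def_of_pos hnp]
    push_cast
    congr 1; ring
  rw [hsq, cpow_def_of_ne_zero ha0, cpow_def_of_ne_zero hb0]
  simp only [one_div, ← Complex.exp_neg]
  simp only [← mul_assoc, ← Complex.exp_add]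
  congr 2
  rw [zero_pow two_ne_zero, mul_zero, zero_div, zero_div]
  linear_combination (-1/2) * hlog + (-1/2)*hlog2

theorem kaux_gauss (n : ℕ) (h2 : Even n) (hn : 0 < n) :
    ∑ r ∈ range n, cexp (-(Real.pi * I * (r:ℂ)^2 / n)) =
     (Real.sqrt n : ℂ) * cexp (-(Real.pi * I / 4)) := by
  have h := kaux_step1 n h2 hn
  rw [kaux_step3 n h2 hn, kaux_step4 n h2 hn] at h
  refine mul_right_cancel₀ ?_ h
  have him : (1/(n:ℂ) + I).im = 1 := by
    have : (1/(n:ℂ) + I) = ((1/n : ℝ) : ℂ) + I := by push_cast; ring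
    rw [this]; simp
  have hb := norm_jacobiTheta_sub_one_le (τ := 1/(n:ℂ) + I) (by rw [him]; norm_num)
  intro h0
  rw [h0, him] at hb
  have hq : Real.exp (-Real.pi * 1) < 1/4 := by
    have h1 : (4:ℝ) < Real.exp Real.pi := by
      have := Real.add_one_le_exp Real.pi
      linarith [Real.pi_gt_three]
    rw [mul_one, Real.exp_neg, one_div]
    exact inv_strictAnti₀ (by norm_num) h1
  have hp := Real.exp_pos (-Real.pi * 1)
  generalize Real.exp (-Real.pi * 1) = q at *
  have : 0 < 1 - q := by linarith
  rw [div_mul_eq_mul_div, le_div_iff₀ this] at hb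
  simp at hb
  linarith

theorem kaux_sum (k : ℕ) (hk : 1 ≤ k) (ε : ℤ) (hε : ε = 1 ∨ ε = -1) :
    ∑ r : Fin (2*k), cexp (-(2 * Real.pi * I / (4 * (k : ℂ))) * (((r:ℕ):ℂ) * (ε:ℂ) * ((r:ℕ):ℂ))) =
     (Real.sqrt (2*k) : ℂ) * cexp (-(Real.pi * I * ε / 4)) := by
  have hk0 : (k:ℂ) ≠ 0 := by exact_mod_cast (by omega : k ≠ 0)
  have h := kaux_gauss (2*k) (by simp) (by omega)
  rw [Finset.sum_range (fun r : ℕ => cexp (-(Real.pi * I * (r:ℂ)^2 / (2*k:ℕ))))] at h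
  rcases hε with rfl | rfl
  · convert h using 2
    · congr 1; push_cast; field_simp; ring
    · push_cast; rfl
    · simp
  · have h' := congrArg (starRingEnd ℂ) h
    rw [map_sum, map_mul, conj_ofReal, ← exp_conj] at h'
    simp_rw [← exp_conj] at h'
    convert h' using 2
    · congr 1; simp [show (starRingEnd ℂ) 2 = 2 from Complex.conj_ofNat 2]; field_simp; ring
    · push_cast; rfl
    · congr 1; simp [show (starRingEnd ℂ) 4 = 4 from Complex.conj_ofNat 4]

theorem kaux_charpoly (N : ℕ) (A : Matrix (Fin N) (Fin N) ℝ) (e : ℝ)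
    (B : Matrix (Fin (N + 1)) (Fin (N + 1)) ℝ)
    (hblock : ∀ i j : Fin N, B i.castSucc j.castSucc = A i j)
    (hdiag : B (Fin.last N) (Fin.last N) = e)
    (hrow : ∀ i : Fin N, B i.castSucc (Fin.last N) = 0)
    (hcol : ∀ j : Fin N, B (Fin.last N) j.castSucc = 0) :
    B.charpoly = A.charpoly * (Polynomial.X - Polynomial.C e) := by
  have hB : B = Matrix.reindex finSumFinEquiv finSumFinEquiv
      (Matrix.fromBlocks A 0 0 (Matrix.diagonal (fun _ : Fin 1 => e))) := by
    have h1 : ∀ i : Fin N, finSumFinEquiv.symm i.castSucc = (Sum.inl i : Fin N ⊕ Fin 1) := fun i => by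
      rw [Equiv.symm_apply_eq]; rfl
    have h2 : finSumFinEquiv.symm (Fin.last N) = (Sum.inr 0 : Fin N ⊕ Fin 1) := by
      rw [Equiv.symm_apply_eq]; rfl
    ext i j
    refine Fin.lastCases ?_ (fun i => ?_) i <;> refine Fin.lastCases ?_ (fun j => ?_) j <;>
    simp [Matrix.reindex_apply, h1, h2, hblock, hdiag, hrow, hcol]
  rw [hB, Matrix.charpoly_reindex, Matrix.charpoly_fromBlocks_zero₁₂, Matrix.charpoly_diagonal]
  simp

theorem kaux_sig {N : ℕ} (A : Matrix (Fin N) (Fin N) ℤ) (hA : (A.map ((↑) : ℤ → ℝ)).IsHermitian) :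
    intMatrixSignature A hA =
      ((A.map ((↑) : ℤ → ℝ)).charpoly.roots.countP (0 < ·) : ℤ) -
      ((A.map ((↑) : ℤ → ℝ)).charpoly.roots.countP (· < 0) : ℤ) := by
  rw [hA.roots_charpoly_eq_eigenvalues, Multiset.countP_map, Multiset.countP_map]
  rfl

theorem kaux_sig_succ (N : ℕ)
    (𝕃 : Matrix (Fin N) (Fin N) ℤ)
    (ε : ℤ) (hε : ε = 1 ∨ ε = -1)
    (𝕃' : Matrix (Fin (N + 1)) (Fin (N + 1)) ℤ)
    (hblock : ∀ i j : Fin N, 𝕃' i.castSucc j.castSucc = 𝕃 i j)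
    (hdiag : 𝕃' (Fin.last N) (Fin.last N) = ε)
    (hrow : ∀ i : Fin N, 𝕃' i.castSucc (Fin.last N) = 0)
    (hcol : ∀ j : Fin N, 𝕃' (Fin.last N) j.castSucc = 0)
    (hH : (𝕃.map ((↑) : ℤ → ℝ)).IsHermitian)
    (hH' : (𝕃'.map ((↑) : ℤ → ℝ)).IsHermitian) :
    intMatrixSignature 𝕃' hH' = intMatrixSignature 𝕃 hH + ε := by
  rw [kaux_sig, kaux_sig, kaux_charpoly N (𝕃.map ((↑) : ℤ → ℝ)) ε (𝕃'.map ((↑) : ℤ → ℝ))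
    (by simp [hblock]) (by simp [hdiag]) (by simp [hrow]) (by simp [hcol]),
    Polynomial.roots_mul (mul_ne_zero (Matrix.charpoly_monic _).ne_zero (Polynomial.X_sub_C_ne_zero _)),
    Polynomial.roots_X_sub_C, Multiset.countP_add, Multiset.countP_add]
  have c1 : ∀ (p : ℝ → Prop) [DecidablePred p] (x : ℝ), Multiset.countP p {x} = if p x then 1 else 0 := by
    intro p _ x
    rw [← Multiset.cons_zero, Multiset.countP_cons]; simp
  rw [c1, c1]
  rcases hε with rfl | rfl
  · norm_num; ring
  · norm_num; ring

/-- Stabilization (first Kirby move) invariance of the `U(1)` Reshetikhin–Turaev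
expression: extending the `N × N` symmetric integer linking matrix `𝕃` by a distant
unknot with framing `ε = ±1` (a new index with diagonal entry `ε` and zero
off-diagonal entries) leaves the quantity
`(2k)^{-N/2} e^{iπσ(𝕃)/4} Σ_m exp(-(2πi/(4k)) mᵀ𝕃m)` unchanged, where the sum runs
over all colour assignments with values in `{0,…,2k-1}` and `σ` is the signature. -/
theorem kirby_stabilization_invariance (k N : ℕ) (hk : 1 ≤ k)
    (𝕃 : Matrix (Fin N) (Fin N) ℤ) (h𝕃 : 𝕃.IsSymm)
    (ε : ℤ) (hε : ε = 1 ∨ ε = -1)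
    (𝕃' : Matrix (Fin (N + 1)) (Fin (N + 1)) ℤ)
    (hblock : ∀ i j : Fin N, 𝕃' i.castSucc j.castSucc = 𝕃 i j)
    (hdiag : 𝕃' (Fin.last N) (Fin.last N) = ε)
    (hrow : ∀ i : Fin N, 𝕃' i.castSucc (Fin.last N) = 0)
    (hcol : ∀ j : Fin N, 𝕃' (Fin.last N) j.castSucc = 0)
    (hH : (𝕃.map ((↑) : ℤ → ℝ)).IsHermitian)
    (hH' : (𝕃'.map ((↑) : ℤ → ℝ)).IsHermitian) :
    ((Real.sqrt (2 * k) : ℂ) ^ (N + 1))⁻¹ *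
      Complex.exp (Real.pi * Complex.I * ((intMatrixSignature 𝕃' hH' : ℤ) : ℂ) / 4) *
      (∑ m' : Fin (N + 1) → Fin (2 * k),
        Complex.exp (-(2 * Real.pi * Complex.I / (4 * (k : ℂ))) *
          (∑ i : Fin (N + 1), ∑ j : Fin (N + 1),
            ((m' i : ℕ) : ℂ) * ((𝕃' i j : ℤ) : ℂ) * ((m' j : ℕ) : ℂ)))) =
    ((Real.sqrt (2 * k) : ℂ) ^ N)⁻¹ *
      Complex.exp (Real.pi * Complex.I * ((intMatrixSignature 𝕃 hH : ℤ) : ℂ) / 4) *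
      (∑ m : Fin N → Fin (2 * k),
        Complex.exp (-(2 * Real.pi * Complex.I / (4 * (k : ℂ))) *
          (∑ i : Fin N, ∑ j : Fin N,
            ((m i : ℕ) : ℂ) * ((𝕃 i j : ℤ) : ℂ) * ((m j : ℕ) : ℂ)))) := by
  have hs : (Real.sqrt (2*k) : ℂ) ≠ 0 := by
    have : (0:ℝ) < 2 * k := by positivity
    exact_mod_cast (Real.sqrt_pos.2 this).ne'
  rw [kaux_sig_succ N 𝕃 ε hε 𝕃' hblock hdiag hrow hcol hH hH']
  have hsum : (∑ m' : Fin (N + 1) → Fin (2 * k),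
        Complex.exp (-(2 * Real.pi * Complex.I / (4 * (k : ℂ))) *
          (∑ i : Fin (N + 1), ∑ j : Fin (N + 1),
            ((m' i : ℕ) : ℂ) * ((𝕃' i j : ℤ) : ℂ) * ((m' j : ℕ) : ℂ)))) =
      (∑ r : Fin (2*k), cexp (-(2 * Real.pi * I / (4 * (k : ℂ))) * (((r:ℕ):ℂ) * (ε:ℂ) * ((r:ℕ):ℂ)))) *
      (∑ m : Fin N → Fin (2 * k),
        Complex.exp (-(2 * Real.pi * Complex.I / (4 * (k : ℂ))) *
          (∑ i : Fin N, ∑ j : Fin N,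
            ((m i : ℕ) : ℂ) * ((𝕃 i j : ℤ) : ℂ) * ((m j : ℕ) : ℂ)))) := by
    rw [← (Fin.snocEquiv (fun _ : Fin (N+1) => Fin (2*k))).sum_comp, Fintype.sum_prod_type, sum_mul_sum]
    refine sum_congr rfl fun r _ => sum_congr rfl fun m _ => ?_
    rw [← Complex.exp_add, ← mul_add]
    congr 2
    simp [Fin.snocEquiv, Fin.sum_univ_castSucc, hblock, hdiag, hrow, hcol]
    ring
  rw [hsum, kaux_sum k hk ε hε]
  have he : cexp (Real.pi * I * ((intMatrixSignature 𝕃 hH + ε : ℤ) : ℂ) / 4) =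
    cexp (Real.pi * I * ((intMatrixSignature 𝕃 hH : ℤ) : ℂ) / 4) * cexp (Real.pi * I * ε / 4) := by
    rw [← Complex.exp_add]; congr 1; push_cast; ring
  have he2 : cexp (Real.pi * I * ε / 4) * cexp (-(Real.pi * I * ε / 4)) = 1 := by
    rw [← Complex.exp_add]; simp
  rw [he, pow_succ, mul_inv]
  generalize (∑ m : Fin N → Fin (2 * k), _ : ℂ) = S
  generalize cexp (Real.pi * I * ((intMatrixSignature 𝕃 hH : ℤ) : ℂ) / 4) = E at *
  generalize ((Real.sqrt (2*k) : ℂ)^N)⁻¹ = P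
  have h3 : (Real.sqrt (2*k) : ℂ)⁻¹ * (Real.sqrt (2*k) : ℂ) = 1 := inv_mul_cancel₀ hs
  generalize (Real.sqrt (2*k) : ℂ)⁻¹ = Q at *
  linear_combination (P * E * S * Q * (Real.sqrt (2*k) : ℂ)) * he2 + P * E * S * h3
end

section
/- Let k ≥ 1 and p ≥ 1 be integers with p dividing 2k, let d = 2k/p, let ε ∈ {1,−1}, and let s be an integer. Then Σ_{b=0}^{p−1} exp(−(2πi/(4k))·(ε (d b)² + 2 (d b)(d s))) = exp((2πi/(4k))·ε (d s)²) · Σ_{b=0}^{p−1} exp(−(2πi/(4k))·ε (d b)²). This completed-square identity for colours restricted to multiples of d is the key step showing that the generalized invariant I_{(p,k)} associated with the subgroup ℤ_p ⊂ ℤ_{2k} is invariant under Kirby moves by the same argument as for I_k. -/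
open Complex Finset

theorem shift_sum_aux (F : ℤ → ℂ) (p : ℕ) (hF : ∀ x, F (x + p) = F x) (t : ℤ) :
    ∑ b ∈ Finset.range p, F ((b : ℤ) + t) = ∑ b ∈ Finset.range p, F (b : ℤ) := by
  have step : ∀ t : ℤ, ∑ b ∈ Finset.range p, F ((b : ℤ) + (t + 1))
      = ∑ b ∈ Finset.range p, F ((b : ℤ) + t) := by
    intro t
    have h1 := Finset.sum_range_succ (fun b : ℕ => F ((b : ℤ) + t)) p
    have h2 := Finset.sum_range_succ' (fun b : ℕ => F ((b : ℤ) + t)) p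
    rw [h1] at h2
    have h3 : F ((p : ℤ) + t) = F (((0 : ℕ) : ℤ) + t) := by
      rw [add_comm, hF]; simp
    simp only [h3] at h2
    rw [add_right_cancel h2]
    refine Finset.sum_congr rfl fun b _ => ?_
    congr 1
    push_cast
    ring
  induction t using Int.induction_on with
  | zero => simp
  | succ n ih => rw [step, ih]
  | pred n ih =>
    rw [← ih, ← step]
    simp

/-- The completed-square identity for colours restricted to multiples of `d = 2k/p`
(the subgroup `ℤ_p ⊆ ℤ_{2k}`): for `ε = ±1` and any integer `s`,
`Σ_{b=0}^{p-1} exp(-(2πi/(4k))(ε (db)² + 2(db)(ds)))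
  = exp((2πi/(4k)) ε (ds)²) · Σ_{b=0}^{p-1} exp(-(2πi/(4k)) ε (db)²)`.
This is the key step in the Kirby-move invariance of the generalized invariant
`I_{(p,k)}`. -/
theorem restricted_colour_completed_square (k p : ℕ) (hk : 1 ≤ k) (hp : 1 ≤ p)
    (hdvd : p ∣ 2 * k) (d : ℕ) (hd : d = 2 * k / p)
    (ε : ℤ) (hε : ε = 1 ∨ ε = -1) (s : ℤ) :
    (∑ b ∈ Finset.range p,
        Complex.exp (-(2 * Real.pi * Complex.I / (4 * (k : ℂ))) *
          ((ε : ℂ) * ((d : ℂ) * (b : ℂ)) ^ 2 +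
            2 * ((d : ℂ) * (b : ℂ)) * ((d : ℂ) * (s : ℂ))))) =
      Complex.exp ((2 * Real.pi * Complex.I / (4 * (k : ℂ))) *
          ((ε : ℂ) * ((d : ℂ) * (s : ℂ)) ^ 2)) *
        (∑ b ∈ Finset.range p,
          Complex.exp (-(2 * Real.pi * Complex.I / (4 * (k : ℂ))) *
            ((ε : ℂ) * ((d : ℂ) * (b : ℂ)) ^ 2))) := by
  have hk0 : (k : ℂ) ≠ 0 := by
    exact_mod_cast (by omega : k ≠ 0)
  have hdp : d * p = 2 * k := by rw [hd]; exact Nat.div_mul_cancel hdvd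
  have hdpC : (d : ℂ) * p = 2 * k := by exact_mod_cast hdp
  have hee : (ε : ℂ) * ε = 1 := by rcases hε with h | h <;> simp [h]
  have key := shift_sum_aux (fun x : ℤ =>
    Complex.exp (-(2 * Real.pi * Complex.I / (4 * (k : ℂ))) *
            ((ε : ℂ) * ((d : ℂ) * (x : ℂ)) ^ 2))) p (by
      intro x
      rw [Complex.exp_eq_exp_iff_exists_int]
      refine ⟨-(ε * (d * x + k)), ?_⟩
      have e : (d : ℂ) * ((x + p : ℤ) : ℂ) = d * x + 2 * k := by
        push_cast; rw [mul_add, hdpC]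
      simp only [e]
      push_cast
      field_simp
      ring) (ε * s)
  simp only [Int.cast_natCast] at key
  rw [← key, Finset.mul_sum]
  refine Finset.sum_congr rfl fun b _ => ?_
  rw [← Complex.exp_add]
  congr 1
  push_cast
  have h3 : (ε : ℂ) * ((d : ℂ) * (b + ε * s)) ^ 2
      = ε * (d * b) ^ 2 + 2 * (d * b) * (d * s) + ε * (d * s) ^ 2 := by
    linear_combination (2 * (d : ℂ) ^ 2 * b * s + ε * d ^ 2 * s ^ 2) * hee
  rw [h3]
  ring
end
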